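/- For every real k > 3/2 there exists C_k > 0 depending only on k such that for every λ ≥ 0 and all functions u, v on S² with finite G^{k/2}_λ norm, the product uv has finite G^{k/2}_λ norm and ‖uv‖_{G^{k/2}_λ} ≤ C_k ‖u‖_{G^{k/2}_λ} ‖v‖_{G^{k/2}_λ}. -/

import Mathlib

open MeasureTheory
open scoped ENNReal

noncomputable section

/-- Functions on the unit sphere, represented in colatitude-longitude coordinates `(θ, φ)`. -/
abbrev SphereFun : Type := ℝ → ℝ → ℝ

/-- The `L²` inner product on the sphere:
`⟨u,v⟩ = ∫₀^{2π} ∫₀^π u v sin θ dθ dφ`. -/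
def sInner (u v : SphereFun) : ℝ :=
  ∫ φ in (0:ℝ)..(2*Real.pi), ∫ θ in (0:ℝ)..Real.pi, u θ φ * v θ φ * Real.sin θ

/-- Legendre polynomials via Rodrigues' formula. -/
def legP (n : ℕ) (s : ℝ) : ℝ :=
  (1 / ((2:ℝ)^n * (Nat.factorial n : ℝ))) * iteratedDeriv n (fun x : ℝ => (x^2 - 1)^n) s

/-- Associated Legendre functions `P_n^m`. -/
def assocLegP (n m : ℕ) (s : ℝ) : ℝ :=
  (-1 : ℝ)^m * (1 - s^2) ^ ((m : ℝ)/2) * iteratedDeriv m (legP n) s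

/-- Real spherical harmonics `Y_n^m`. -/
def Ynm (n : ℕ) (m : ℤ) : SphereFun := fun θ φ =>
  if m = 0 then
    Real.sqrt ((2*(n:ℝ)+1)/(4*Real.pi)) * legP n (Real.cos θ)
  else if 0 < m then
    (-1 : ℝ)^(m.natAbs) * Real.sqrt 2 *
      Real.sqrt ((2*(n:ℝ)+1)/(4*Real.pi) *
        ((Nat.factorial (n - m.natAbs) : ℝ) / (Nat.factorial (n + m.natAbs) : ℝ))) *
      assocLegP n m.natAbs (Real.cos θ) * Real.cos ((m.natAbs : ℝ) * φ)
  else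
    (-1 : ℝ)^(m.natAbs) * Real.sqrt 2 *
      Real.sqrt ((2*(n:ℝ)+1)/(4*Real.pi) *
        ((Nat.factorial (n - m.natAbs) : ℝ) / (Nat.factorial (n + m.natAbs) : ℝ))) *
      assocLegP n m.natAbs (Real.cos θ) * Real.sin ((m.natAbs : ℝ) * φ)

/-- The spherical-harmonic coefficient `u_n^m = ⟨u, Y_n^m⟩`. -/
def coeff (u : SphereFun) (n : ℕ) (m : ℤ) : ℝ := sInner u (Ynm n m)

/-- `μ_n = n(n+1) + 1`. -/
def muSp (n : ℕ) : ℝ := (n:ℝ)*((n:ℝ)+1)+1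

/-- Squared (inhomogeneous) Sobolev norm `‖u‖²_{H^k} = Σ μ_n^k |u_n^m|²`. -/
def sobNormSq (k : ℕ) (u : SphereFun) : ℝ≥0∞ :=
  ∑' p : ℕ × ℤ, if |p.2| ≤ (p.1 : ℤ) then
    ENNReal.ofReal ((muSp p.1)^k * (coeff u p.1 p.2)^2) else 0

/-- Squared homogeneous Sobolev norm `‖u‖²_{Ḣ^k} = Σ_{n ≥ 1} λ_n^k |u_n^m|²`. -/
def dotNormSq (k : ℕ) (u : SphereFun) : ℝ≥0∞ :=
  ∑' p : ℕ × ℤ, if 1 ≤ p.1 ∧ |p.2| ≤ (p.1 : ℤ) then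
    ENNReal.ofReal (((p.1:ℝ)*((p.1:ℝ)+1))^k * (coeff u p.1 p.2)^2) else 0

/-- Squared Gevrey norm `‖u‖²_{G_λ} = Σ_{n ≥ 1} μ_n² e^{2λ√μ_n} |u_n^m|²`. -/
def gevNormSq (lam : ℝ) (u : SphereFun) : ℝ≥0∞ :=
  ∑' p : ℕ × ℤ, if 1 ≤ p.1 ∧ |p.2| ≤ (p.1 : ℤ) then
    ENNReal.ofReal ((muSp p.1)^2 * Real.exp (2*lam*Real.sqrt (muSp p.1)) *
      (coeff u p.1 p.2)^2) else 0

/-- `∂_θ`. -/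
def dTheta (u : SphereFun) : SphereFun := fun θ φ => deriv (fun t => u t φ) θ

/-- `∂_φ`. -/
def dPhi (u : SphereFun) : SphereFun := fun θ φ => deriv (fun p => u θ p) φ

/-- The Laplace–Beltrami operator in colatitude-longitude coordinates:
`Δu = (1/sinθ)∂_θ(sinθ ∂_θu) + (1/sin²θ)∂²_φu`. -/
def lapS (u : SphereFun) : SphereFun := fun θ φ =>
  (1 / Real.sin θ) * deriv (fun t => Real.sin t * dTheta u t φ) θ
  + (1 / (Real.sin θ)^2) * dPhi (dPhi u) θ φ

/-- A zonal function: one depending only on the colatitude `θ`. -/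
def Zonal (u : SphereFun) : Prop := ∀ (θ φ₁ φ₂ : ℝ), u θ φ₁ = u θ φ₂

/-- Zonal on the coordinate chart `θ ∈ [0, π]`. -/
def ZonalOn (u : SphereFun) : Prop :=
  ∀ θ ∈ Set.Icc (0:ℝ) Real.pi, ∀ (φ₁ φ₂ : ℝ), u θ φ₁ = u θ φ₂

/-- `2π`-periodicity in the longitude. -/
def PeriodicPhi (u : SphereFun) : Prop := ∀ θ φ, u θ (φ + 2*Real.pi) = u θ φ

/-- The advection term `U·∇f` for the velocity `U = ∇⊥Ψ`, i.e.
`(1/sinθ)∂_φΨ ∂_θf − ∂_θΨ (1/sinθ)∂_φf`. -/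
def advect (Ψ f : SphereFun) : SphereFun := fun θ φ =>
  (1 / Real.sin θ) * dPhi Ψ θ φ * dTheta f θ φ
  - dTheta Ψ θ φ * ((1 / Real.sin θ) * dPhi f θ φ)

/-- Smoothness in the coordinates. -/
def SphSmooth (u : SphereFun) : Prop := ContDiff ℝ (⊤ : ℕ∞) (Function.uncurry u)

/-- A function is trivial if it is a zonal function plus an element of
`span{Y₂^m : |m| ≤ 2}`; non-triviality is the negation of this. -/
def SphNontrivial (u : SphereFun) : Prop :=
  ¬ ∃ (z : SphereFun) (c : ℤ → ℝ), Zonal z ∧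
      ∀ θ ∈ Set.Icc (0:ℝ) Real.pi, ∀ φ : ℝ,
        u θ φ = z θ φ + ∑ m ∈ Finset.Icc (-2 : ℤ) 2, c m * Ynm 2 m θ φ

/-- Real analyticity on the sphere, characterized by membership in a Gevrey class. -/
def RealAnalyticSphere (u : SphereFun) : Prop := ∃ lam > 0, gevNormSq lam u < ⊤

/-- Squared Gevrey norm of index `k/2` and radius `λ`:
`‖u‖²_{G^{k/2}_λ} = Σ_{n ≥ 0} Σ_{|m| ≤ n} μ_n^k e^{2λ√μ_n} |u_n^m|²`. -/
def gevKNormSq (k lam : ℝ) (u : SphereFun) : ℝ≥0∞ :=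
  ∑' p : ℕ × ℤ, if |p.2| ≤ (p.1 : ℤ) then
    ENNReal.ofReal ((muSp p.1) ^ k * Real.exp (2*lam*Real.sqrt (muSp p.1)) *
      (coeff u p.1 p.2)^2) else 0

/-!
Two facts about the spherical harmonics carry the estimate: the addition theorem at coincident
points, `∑ₘ (Y_n^m)² = (2n + 1) / 4π`, and the selection rule, by which `Y_i^{m₁} Y_j^{m₂}` is
orthogonal to `Y_n^m` unless `i`, `j`, `n` satisfy the triangle inequalities. By the latter, the
degree `n` part of `u v` only involves pairs of degrees with `n ≤ i + j` and `n ≤ 2j` or `n ≤ 2i`.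
In the first case the degree `i` component of `u` is bounded in sup norm by the addition theorem and
Bessel's inequality controls the rest; a Cauchy–Schwarz inequality with the weight
`(2i + 1)² / μ_i^k`, summable exactly when `k > 3/2`, sums over `i`. Since `n ≤ i + j` gives
`√μ_n ≤ √μ_i + √μ_j`, the exponential weight splits between the factors, so no constant depends on
`λ`. Finite norm makes the harmonic expansion converge uniformly, and completeness identifies its
sum, so the bound passes from finite expansions to `u v`.
-/

section Legendre

open Polynomial

/-- Derivatives of `(X² - 1)ⁿ`, the polynomials in Rodrigues' formula. -/
def rodrigues (n j : ℕ) : ℝ[X] := derivative^[j] ((X ^ 2 - 1) ^ n)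

theorem derivative_rodrigues (n j : ℕ) : derivative (rodrigues n j) = rodrigues n (j + 1) :=
  (Function.iterate_succ_apply' ..).symm

theorem rodrigues_one (n : ℕ) :
    (X ^ 2 - 1) * rodrigues n 1 = 2 * (n : ℝ[X]) * X * rodrigues n 0 := by
  rcases n with _ | n
  · simp [rodrigues]
  · simp only [rodrigues, Function.iterate_one, Function.iterate_zero, id, derivative_pow,
      derivative_sub, derivative_X, derivative_one, add_tsub_cancel_right, C_eq_natCast]
    push_cast
    ring

theorem rodrigues_ode (n j : ℕ) :
    (X ^ 2 - 1) * rodrigues n (j + 2) + 2 * ((j : ℝ[X]) + 1 - (n : ℝ[X])) * X * rodrigues n (j + 1)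
      + ((j : ℝ[X]) + 1) * ((j : ℝ[X]) - 2 * (n : ℝ[X])) * rodrigues n j = 0 := by
  induction j with
  | zero =>
    have h := congrArg derivative (rodrigues_one n)
    simp only [derivative_mul, derivative_rodrigues, derivative_sub, derivative_X_sq,
      derivative_X, derivative_one, derivative_natCast, derivative_ofNat, map_ofNat] at h
    push_cast
    linear_combination h
  | succ j ih =>
    have h := congrArg derivative ih
    simp only [derivative_mul, derivative_rodrigues, derivative_sub, derivative_add,
      derivative_X_sq, derivative_X, derivative_one, derivative_zero, derivative_natCast,
      derivative_ofNat, map_ofNat] at h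
    push_cast
    linear_combination h

/-- The `m`-th derivative of the Legendre polynomial of degree `n`, as a polynomial. -/
def legendreDeriv (n m : ℕ) : ℝ[X] := (1 / (2 ^ n * n.factorial) : ℝ) • rodrigues n (n + m)

theorem derivative_legendreDeriv (n m : ℕ) :
    derivative (legendreDeriv n m) = legendreDeriv n (m + 1) := by
  rw [legendreDeriv, derivative_smul, derivative_rodrigues]
  rfl

theorem iterate_derivative_legendreDeriv_zero (n m : ℕ) :
    derivative^[m] (legendreDeriv n 0) = legendreDeriv n m := by
  induction m with
  | zero => rfl
  | succ m ih => rw [Function.iterate_succ_apply', ih, derivative_legendreDeriv]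

theorem iteratedDeriv_eval (p : ℝ[X]) (m : ℕ) :
    iteratedDeriv m (fun x => p.eval x) = fun x => (derivative^[m] p).eval x := by
  induction m with
  | zero => simp
  | succ m ih =>
    rw [iteratedDeriv_succ, ih, Function.iterate_succ_apply']
    exact funext fun x => Polynomial.deriv _

theorem legP_eq_eval (n : ℕ) : legP n = fun s => (legendreDeriv n 0).eval s := by
  funext s
  have h := congrFun (iteratedDeriv_eval ((X ^ 2 - 1) ^ n) n) s
  simp only [eval_pow, eval_sub, eval_X, eval_one] at h
  rw [legP, h, legendreDeriv, eval_smul, smul_eq_mul]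
  rfl

theorem iteratedDeriv_legP (n m : ℕ) :
    iteratedDeriv m (legP n) = fun s => (legendreDeriv n m).eval s := by
  rw [legP_eq_eval, iteratedDeriv_eval, iterate_derivative_legendreDeriv_zero]

theorem natDegree_X_sq_sub_one_pow (n : ℕ) : ((X ^ 2 - 1 : ℝ[X]) ^ n).natDegree = n * 2 := by
  rw [natDegree_pow]
  congr 1
  exact natDegree_X_pow_sub_C

theorem natDegree_legendreDeriv_le (n m : ℕ) : (legendreDeriv n m).natDegree ≤ n - m := by
  refine (natDegree_smul_le _ _).trans ((natDegree_iterate_derivative _ _).trans ?_)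
  rw [natDegree_X_sq_sub_one_pow]
  omega

theorem legendreDeriv_eq_zero_of_lt {n m : ℕ} (h : n < m) : legendreDeriv n m = 0 := by
  rw [legendreDeriv, rodrigues, iterate_derivative_eq_zero, smul_zero]
  rw [natDegree_X_sq_sub_one_pow]
  omega

theorem coeff_legendreDeriv_ne_zero (m j : ℕ) : (legendreDeriv (m + j) m).coeff j ≠ 0 := by
  have hmonic : ((X ^ 2 - 1 : ℝ[X]) ^ (m + j)).coeff (j + (m + j + m)) = 1 := by
    have h := ((monic_X_pow_sub_C (1 : ℝ) two_ne_zero).pow (m + j)).coeff_natDegree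
    rw [map_one, natDegree_X_sq_sub_one_pow] at h
    rwa [show j + (m + j + m) = (m + j) * 2 by ring]
  rw [legendreDeriv, rodrigues, coeff_smul, coeff_iterate_derivative, hmonic, nsmul_one,
    smul_eq_mul]
  have hfac : (j + (m + j + m)).descFactorial (m + j + m) ≠ 0 := by
    rw [Ne, Nat.descFactorial_eq_zero_iff_lt]
    omega
  positivity

theorem degree_legendreDeriv (m j : ℕ) : (legendreDeriv (m + j) m).degree = j := by
  refine le_antisymm ?_ (le_degree_of_ne_zero (coeff_legendreDeriv_ne_zero m j))
  exact degree_le_of_natDegree_le <| (natDegree_legendreDeriv_le _ _).trans_eq <| by omega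

/-- For fixed `m`, the `m`-th derivatives of the Legendre polynomials, one in each degree. -/
def legendreDerivSequence (m : ℕ) : Polynomial.Sequence ℝ where
  elems' j := legendreDeriv (m + j) m
  degree_eq' j := degree_legendreDeriv m j

theorem span_range_legendreDeriv (m : ℕ) :
    Submodule.span ℝ (Set.range fun j => legendreDeriv (m + j) m) = ⊤ :=
  (legendreDerivSequence m).span fun i =>
    (leadingCoeff_ne_zero.2 ((legendreDerivSequence m).ne_zero i)).isUnit

theorem eval_one_legendreDeriv_zero (n : ℕ) : (legendreDeriv n 0).eval 1 = 1 := by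
  have hfactor : (X ^ 2 - 1 : ℝ[X]) ^ n = (X - C 1) ^ n * (X + C 1) ^ n := by
    rw [← mul_pow, map_one]
    ring
  have heval : (rodrigues n n).eval 1 = n.factorial * 2 ^ n := by
    rw [rodrigues, hfactor, iterate_derivative_mul, eval_finsetSum,
      Finset.sum_eq_single_of_mem 0 (by simp)]
    · rw [Nat.sub_zero, iterate_derivative_X_sub_pow_self]
      simp [one_add_one_eq_two]
    · intro i hi hi0
      have : n - (n - i) ≠ 0 := by
        have := Finset.mem_range.1 hi
        omega
      rw [iterate_derivative_X_sub_pow]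
      simp [this]
  rw [legendreDeriv, add_zero, eval_smul, heval, smul_eq_mul]
  field_simp

theorem derivative_one_sub_X_sq_pow_mul_legendreDeriv (n m : ℕ) :
    derivative ((1 - X ^ 2) ^ (m + 1) * legendreDeriv n (m + 1)) =
      -(((n : ℝ) - m) * (n + m + 1)) • ((1 - X ^ 2) ^ m * legendreDeriv n m) := by
  have hode : (1 - X ^ 2) * legendreDeriv n (m + 2)
      - 2 * ((m : ℝ[X]) + 1) * X * legendreDeriv n (m + 1)
      + ((n : ℝ[X]) - (m : ℝ[X])) * ((n : ℝ[X]) + (m : ℝ[X]) + 1) * legendreDeriv n m = 0 := by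
    have h := rodrigues_ode n (n + m)
    push_cast at h
    simp only [legendreDeriv, smul_eq_C_mul, ← add_assoc]
    linear_combination (-C (1 / (2 ^ n * n.factorial) : ℝ)) * h
  simp only [derivative_mul, derivative_legendreDeriv, derivative_pow, derivative_sub,
    derivative_one, derivative_X, smul_eq_C_mul, C_neg, C_mul, C_sub, C_add, C_eq_natCast, C_1,
    add_tsub_cancel_right, Nat.cast_ofNat, map_ofNat]
  push_cast
  linear_combination (1 - X ^ 2) ^ m * hode

/-- The ratio `(n - m)! / (n + m)!` normalizing the associated Legendre functions. The
subtraction truncates, so it is meaningful only for `m ≤ n`. -/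
def factorialRatio (n m : ℕ) : ℝ := (n - m).factorial / (n + m).factorial

theorem factorialRatio_pos (n m : ℕ) : 0 < factorialRatio n m := by
  unfold factorialRatio
  positivity

@[simp]
theorem factorialRatio_zero (n : ℕ) : factorialRatio n 0 = 1 :=
  div_self (Nat.cast_ne_zero.2 n.factorial_ne_zero)

theorem factorialRatio_succ_mul {n m : ℕ} (h : m < n) :
    factorialRatio n (m + 1) * ((n - m) * (n + m + 1)) = factorialRatio n m := by
  obtain ⟨d, rfl⟩ := Nat.exists_eq_add_of_lt h
  simp only [factorialRatio, show m + d + 1 - (m + 1) = d by omega,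
    show m + d + 1 - m = d + 1 by omega, show m + d + 1 + (m + 1) = m + d + 1 + m + 1 by omega,
    Nat.factorial_succ]
  push_cast
  field_simp
  ring

/-- The polynomial `(n - m)! / (n + m)! · (P_n^m)²`. -/
def assocLegendreSq (n m : ℕ) : ℝ[X] :=
  factorialRatio n m • ((1 - X ^ 2) ^ m * legendreDeriv n m * legendreDeriv n m)

theorem derivative_assocLegendreSq_zero (n : ℕ) : derivative (assocLegendreSq n 0) =
    2 * (factorialRatio n 0 • ((1 - X ^ 2) ^ 0 * legendreDeriv n 0 * legendreDeriv n 1)) := by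
  simp only [assocLegendreSq, factorialRatio_zero, one_smul, pow_zero, one_mul, derivative_mul,
    derivative_legendreDeriv]
  ring

theorem derivative_assocLegendreSq_succ {n m : ℕ} (h : m < n) :
    derivative (assocLegendreSq n (m + 1)) =
      factorialRatio n (m + 1) •
          ((1 - X ^ 2) ^ (m + 1) * legendreDeriv n (m + 1) * legendreDeriv n (m + 2))
        - factorialRatio n m •
          ((1 - X ^ 2) ^ m * legendreDeriv n m * legendreDeriv n (m + 1)) := by
  rw [assocLegendreSq, derivative_smul, derivative_mul,
    derivative_one_sub_X_sq_pow_mul_legendreDeriv, derivative_legendreDeriv,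
    ← factorialRatio_succ_mul h]
  simp only [smul_eq_C_mul, C_neg, C_mul]
  ring

-- By the Legendre equation the derivative telescopes, so it suffices to evaluate at `1`.
theorem assocLegendreSq_zero_add_two_mul_sum (n : ℕ) :
    assocLegendreSq n 0 + 2 * ∑ m ∈ Finset.range n, assocLegendreSq n (m + 1) = 1 := by
  have hderiv : derivative
      (assocLegendreSq n 0 + 2 * ∑ m ∈ Finset.range n, assocLegendreSq n (m + 1)) = 0 := by
    rw [derivative_add, derivative_mul, derivative_sum,
      Finset.sum_congr rfl fun m hm => derivative_assocLegendreSq_succ (Finset.mem_range.1 hm),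
      Finset.sum_range_sub fun m => factorialRatio n m •
        ((1 - X ^ 2) ^ m * legendreDeriv n m * legendreDeriv n (m + 1)),
      legendreDeriv_eq_zero_of_lt n.lt_succ_self, derivative_assocLegendreSq_zero,
      derivative_ofNat]
    simp only [mul_zero, smul_zero, zero_mul, zero_add]
    ring
  have heval : (assocLegendreSq n 0
      + 2 * ∑ m ∈ Finset.range n, assocLegendreSq n (m + 1)).eval 1 = 1 := by
    simp [assocLegendreSq, eval_finsetSum, eval_one_legendreDeriv_zero]
  rw [eq_C_of_derivative_eq_zero hderiv, eval_C] at heval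
  rw [eq_C_of_derivative_eq_zero hderiv, heval, C_1]

/-- The functional `p ↦ ∫ w p` over `[-1, 1]`. -/
def weightedIntegral (w : C(ℝ, ℝ)) : ℝ[X] →ₗ[ℝ] ℝ where
  toFun p := ∫ x in (-1)..1, w x * p.eval x
  map_add' p q := by
    simp only [eval_add, mul_add]
    exact intervalIntegral.integral_add (Continuous.intervalIntegrable (by fun_prop) _ _)
      (Continuous.intervalIntegrable (by fun_prop) _ _)
  map_smul' c p := by
    simp only [eval_smul, smul_eq_mul, mul_left_comm, intervalIntegral.integral_const_mul,
      RingHom.id_apply]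

theorem weightedIntegral_apply (w : C(ℝ, ℝ)) (p : ℝ[X]) :
    weightedIntegral w p = ∫ x in (-1)..1, w x * p.eval x := rfl

theorem weightedIntegral_one_derivative (p : ℝ[X]) :
    weightedIntegral 1 (derivative p) = p.eval 1 - p.eval (-1) := by
  simp only [weightedIntegral_apply, ContinuousMap.one_apply, one_mul]
  exact intervalIntegral.integral_eq_sub_of_hasDerivAt (fun x _ => p.hasDerivAt x)
    (p.derivative.continuous.intervalIntegrable _ _)

theorem weightedIntegral_one_legendreDeriv_mul (n m : ℕ) (q : ℝ[X]) :
    ((n : ℝ) - m) * (n + m + 1) * weightedIntegral 1 ((1 - X ^ 2) ^ m * legendreDeriv n m * q)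
      = weightedIntegral 1 ((1 - X ^ 2) ^ (m + 1) * legendreDeriv n (m + 1) * derivative q) := by
  have h := weightedIntegral_one_derivative ((1 - X ^ 2) ^ (m + 1) * legendreDeriv n (m + 1) * q)
  rw [derivative_mul, derivative_one_sub_X_sq_pow_mul_legendreDeriv, smul_mul_assoc, map_add,
    map_smul, smul_eq_mul] at h
  simp only [eval_mul, eval_pow, eval_sub, eval_one, eval_X] at h
  linear_combination -h

theorem weightedIntegral_one_legendreDeriv_mul_eq_zero {n m : ℕ} {q : ℝ[X]}
    (h : q.natDegree + m < n) :
    weightedIntegral 1 ((1 - X ^ 2) ^ m * legendreDeriv n m * q) = 0 := by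
  induction hd : q.natDegree using Nat.strong_induction_on generalizing m q with
  | _ d ih =>
    have hderiv : weightedIntegral 1
        ((1 - X ^ 2) ^ (m + 1) * legendreDeriv n (m + 1) * derivative q) = 0 := by
      rcases eq_or_ne q.natDegree 0 with h0 | h0
      · rw [derivative_of_natDegree_zero h0, mul_zero, map_zero]
      · have hlt := natDegree_derivative_lt h0
        exact ih _ (hd ▸ hlt) (by omega) rfl
    have hpos : (0 : ℝ) < (n - m) * (n + m + 1) :=
      mul_pos (sub_pos.2 (by exact_mod_cast (by omega : m < n))) (by positivity)
    rw [← weightedIntegral_one_legendreDeriv_mul] at hderiv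
    exact (mul_eq_zero.1 hderiv).resolve_left hpos.ne'

theorem weightedIntegral_one_assocLegendreSq_eq {n m : ℕ} (h : m ≤ n) :
    weightedIntegral 1 (assocLegendreSq n m) = weightedIntegral 1 (assocLegendreSq n 0) := by
  induction m with
  | zero => rfl
  | succ m ih =>
    have hstep := weightedIntegral_one_legendreDeriv_mul n m (legendreDeriv n m)
    rw [derivative_legendreDeriv] at hstep
    rw [← ih (by omega), assocLegendreSq, assocLegendreSq, map_smul, map_smul, ← hstep,
      smul_eq_mul, smul_eq_mul, ← factorialRatio_succ_mul h]
    ring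

theorem weightedIntegral_one_assocLegendreSq {n m : ℕ} (h : m ≤ n) :
    weightedIntegral 1 (assocLegendreSq n m) = 2 / (2 * n + 1) := by
  have hone : weightedIntegral 1 1 = 2 := by
    simp [weightedIntegral_apply, one_add_one_eq_two]
  have hsum := congrArg (weightedIntegral 1) (assocLegendreSq_zero_add_two_mul_sum n)
  rw [map_add, two_mul, map_add, map_sum, Finset.sum_congr rfl fun m hm =>
    weightedIntegral_one_assocLegendreSq_eq (Nat.succ_le_of_lt (Finset.mem_range.1 hm)), hone,
    Finset.sum_const, Finset.card_range, nsmul_eq_mul] at hsum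
  rw [weightedIntegral_one_assocLegendreSq_eq h]
  field_simp
  linarith

end Legendre

section Trigonometric

open Real

theorem integral_cos_int_mul_sub_eq_zero {l : ℤ} (hl : l ≠ 0) (δ : ℝ) :
    ∫ φ in (0)..(2 * π), cos (l * φ - δ) = 0 := by
  rw [intervalIntegral.integral_comp_mul_sub _ (Int.cast_ne_zero.2 hl), integral_cos,
    sin_int_mul_two_pi_sub, mul_zero, zero_sub, sin_neg, sub_self, smul_zero]

theorem cos_mul_cos_eq (a b : ℤ) (δ ε φ : ℝ) : cos (a * φ - δ) * cos (b * φ - ε) =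
    cos ((a - b : ℤ) * φ - (δ - ε)) / 2 + cos ((a + b : ℤ) * φ - (δ + ε)) / 2 := by
  rw [show (a - b : ℤ) * φ - (δ - ε) = (a * φ - δ) - (b * φ - ε) by push_cast; ring,
    show (a + b : ℤ) * φ - (δ + ε) = (a * φ - δ) + (b * φ - ε) by push_cast; ring,
    cos_sub (a * φ - δ), cos_add (a * φ - δ)]
  ring

theorem integral_cos_mul_cos (a b : ℤ) (δ ε : ℝ) :
    ∫ φ in (0)..(2 * π), cos (a * φ - δ) * cos (b * φ - ε) =
      (∫ φ in (0)..(2 * π), cos ((a - b : ℤ) * φ - (δ - ε))) / 2 +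
        (∫ φ in (0)..(2 * π), cos ((a + b : ℤ) * φ - (δ + ε))) / 2 := by
  simp only [cos_mul_cos_eq]
  rw [intervalIntegral.integral_add (Continuous.intervalIntegrable (by fun_prop) _ _)
    (Continuous.intervalIntegrable (by fun_prop) _ _), intervalIntegral.integral_div,
    intervalIntegral.integral_div]

theorem integral_cos_mul_cos_eq_zero {a b : ℤ} (h : a.natAbs ≠ b.natAbs) (δ ε : ℝ) :
    ∫ φ in (0)..(2 * π), cos (a * φ - δ) * cos (b * φ - ε) = 0 := by
  rw [integral_cos_mul_cos, integral_cos_int_mul_sub_eq_zero (by omega),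
    integral_cos_int_mul_sub_eq_zero (by omega), zero_div, add_zero]

theorem integral_cos_mul_cos_same {a : ℤ} (ha : a ≠ 0) (δ ε : ℝ) :
    ∫ φ in (0)..(2 * π), cos (a * φ - δ) * cos (a * φ - ε) = π * cos (δ - ε) := by
  rw [integral_cos_mul_cos, integral_cos_int_mul_sub_eq_zero (l := a + a) (by omega), sub_self]
  simp only [Int.cast_zero, zero_mul, zero_sub, cos_neg, intervalIntegral.integral_const,
    smul_eq_mul]
  ring

theorem integral_cos_mul_cos_mul_cos_eq_zero {a b c : ℤ} (hsub : (a - b).natAbs ≠ c.natAbs)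
    (hadd : (a + b).natAbs ≠ c.natAbs) (δ ε ζ : ℝ) :
    ∫ φ in (0)..(2 * π), cos (a * φ - δ) * cos (b * φ - ε) * cos (c * φ - ζ) = 0 := by
  simp only [cos_mul_cos_eq a b, add_mul, div_mul_eq_mul_div]
  rw [intervalIntegral.integral_add (Continuous.intervalIntegrable (by fun_prop) _ _)
    (Continuous.intervalIntegrable (by fun_prop) _ _), intervalIntegral.integral_div,
    intervalIntegral.integral_div, integral_cos_mul_cos_eq_zero hsub,
    integral_cos_mul_cos_eq_zero hadd, zero_div, add_zero]

/-- The phase turning the cosine into the sine used for the harmonics of negative order. -/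
def azimuthalPhase (m : ℤ) : ℝ := if m < 0 then π / 2 else 0

/-- The longitudinal factor of `Y_n^m`: `cos (mφ)` if `0 ≤ m` and `sin (|m|φ)` if `m < 0`. Both
cases are written as a shifted cosine, so that the product formulas need no case distinction. -/
def azimuthal (m : ℤ) (φ : ℝ) : ℝ := cos ((m.natAbs : ℤ) * φ - azimuthalPhase m)

@[fun_prop]
theorem continuous_azimuthal (m : ℤ) : Continuous (azimuthal m) := by
  unfold azimuthal
  fun_prop

theorem azimuthal_add_two_pi (m : ℤ) (φ : ℝ) : azimuthal m (φ + 2 * π) = azimuthal m φ := by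
  rw [azimuthal, mul_add, add_sub_right_comm, cos_add_int_mul_two_pi, azimuthal]

theorem azimuthal_natCast (n : ℕ) (φ : ℝ) : azimuthal n φ = cos (n * φ) := by
  have : ¬ (n : ℤ) < 0 := by omega
  simp [azimuthal, azimuthalPhase, this]

theorem azimuthal_neg_natCast (n : ℕ) (φ : ℝ) (hn : n ≠ 0) :
    azimuthal (-n) φ = sin (n * φ) := by
  have : -(n : ℤ) < 0 := by omega
  rw [azimuthal, azimuthalPhase, if_pos this, cos_sub_pi_div_two, Int.natAbs_neg,
    Int.natAbs_natCast, Int.cast_natCast]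

theorem azimuthal_natCast_sq_add_neg_sq {m : ℕ} (hm : m ≠ 0) (φ : ℝ) :
    azimuthal m φ ^ 2 + azimuthal (-m) φ ^ 2 = 1 := by
  rw [azimuthal_natCast, azimuthal_neg_natCast m φ hm, cos_sq_add_sin_sq]

theorem integral_azimuthal_mul_eq_zero {m l : ℤ} (h : m ≠ l) :
    ∫ φ in (0)..(2 * π), azimuthal m φ * azimuthal l φ = 0 := by
  by_cases hml : m.natAbs = l.natAbs
  · have hphase : cos (azimuthalPhase m - azimuthalPhase l) = 0 := by
      rcases lt_or_ge m 0 with hm | hm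
      · rw [azimuthalPhase, azimuthalPhase, if_pos hm, if_neg (by omega), sub_zero, cos_pi_div_two]
      · rw [azimuthalPhase, azimuthalPhase, if_neg hm.not_gt, if_pos (by omega), zero_sub, cos_neg,
          cos_pi_div_two]
    simp only [azimuthal, hml]
    rw [integral_cos_mul_cos_same (by omega), hphase, mul_zero]
  · exact integral_cos_mul_cos_eq_zero (by omega) _ _

/-- The Neumann factor `ε_m`: `1` if `m = 0` and `2` otherwise. -/
def neumannFactor (m : ℤ) : ℝ := if m = 0 then 1 else 2

theorem neumannFactor_pos (m : ℤ) : 0 < neumannFactor m := by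
  unfold neumannFactor
  split_ifs <;> norm_num

theorem neumannFactor_mul_integral_azimuthal_sq (m : ℤ) :
    neumannFactor m * ∫ φ in (0)..(2 * π), azimuthal m φ * azimuthal m φ = 2 * π := by
  by_cases hm : m = 0
  · simp [hm, neumannFactor, azimuthal, azimuthalPhase]
  · simp only [azimuthal]
    rw [integral_cos_mul_cos_same (by omega), sub_self, cos_zero, neumannFactor, if_neg hm, mul_one]

theorem integral_azimuthal_mul_mul_eq_zero {a b c : ℤ}
    (hsub : ((a.natAbs : ℤ) - b.natAbs).natAbs ≠ c.natAbs)
    (hadd : a.natAbs + b.natAbs ≠ c.natAbs) :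
    ∫ φ in (0)..(2 * π), azimuthal a φ * azimuthal b φ * azimuthal c φ = 0 :=
  integral_cos_mul_cos_mul_cos_eq_zero (by omega) (by omega) _ _ _

theorem integral_fourier_neg_smul_ofReal {f : ℝ → ℝ} (hf : Continuous f) (n : ℤ) :
    ∫ x in (0)..(2 * π), fourier (-n) (x : AddCircle (2 * π)) • (f x : ℂ) =
      ((∫ x in (0)..(2 * π), f x * cos (n * x) : ℝ) : ℂ)
        - Complex.I * ((∫ x in (0)..(2 * π), f x * sin (n * x) : ℝ) : ℂ) := by
  rw [← intervalIntegral.integral_ofReal, ← intervalIntegral.integral_ofReal,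
    ← intervalIntegral.integral_const_mul, ← intervalIntegral.integral_sub
      (Continuous.intervalIntegrable (by fun_prop) _ _)
      (Continuous.intervalIntegrable (by fun_prop) _ _)]
  congr 1 with x
  have hexp : 2 * (π : ℂ) * Complex.I * ((-n : ℤ) : ℂ) * x / ((2 * π : ℝ) : ℂ)
      = ((-(n * x) : ℝ) : ℂ) * Complex.I := by
    have := pi_ne_zero
    push_cast
    field_simp
  rw [fourier_coe_apply, hexp, Complex.exp_mul_I, ← Complex.ofReal_cos, ← Complex.ofReal_sin,
    cos_neg, sin_neg, smul_eq_mul]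
  push_cast
  ring

theorem eq_zero_of_integral_mul_cos_sin_eq_zero {f : ℝ → ℝ} (hf : Continuous f)
    (hper : Function.Periodic f (2 * π))
    (hcos : ∀ n : ℕ, ∫ x in (0)..(2 * π), f x * cos (n * x) = 0)
    (hsin : ∀ n : ℕ, ∫ x in (0)..(2 * π), f x * sin (n * x) = 0) (x : ℝ) : f x = 0 := by
  have : Fact (0 < 2 * π) := ⟨two_pi_pos⟩
  have hperC : Function.Periodic (fun x => (f x : ℂ)) (2 * π) := hper.comp Complex.ofReal
  let F : C(AddCircle (2 * π), ℂ) :=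
    ⟨hperC.lift, continuous_coinduced_dom.2 (Complex.continuous_ofReal.comp hf)⟩
  have hcoeff : fourierCoeff F = 0 := by
    funext n
    have hfourier := integral_fourier_neg_smul_ofReal hf n
    have hzero : (∫ x in (0)..(2 * π), f x * cos (n * x)) = 0 ∧
        (∫ x in (0)..(2 * π), f x * sin (n * x)) = 0 := by
      obtain ⟨k, rfl | rfl⟩ := n.eq_nat_or_neg
      · exact ⟨hcos k, hsin k⟩
      · simp [hcos k, hsin k]
    rw [hzero.1, hzero.2, Complex.ofReal_zero, mul_zero, sub_zero] at hfourier
    rw [fourierCoeff_eq_intervalIntegral F n 0, zero_add]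
    exact (congrArg _ hfourier).trans (smul_zero _)
  have hsum := has_pointwise_sum_fourier_series_of_summable (f := F)
    (hcoeff ▸ summable_zero) (x : AddCircle (2 * π))
  simp only [hcoeff, Pi.zero_apply, zero_smul] at hsum
  exact Complex.ofReal_eq_zero.1 (hsum.unique hasSum_zero)

theorem eq_zero_of_integral_mul_azimuthal_eq_zero {f : ℝ → ℝ} (hf : Continuous f)
    (hper : Function.Periodic f (2 * π))
    (h : ∀ m : ℤ, ∫ φ in (0)..(2 * π), f φ * azimuthal m φ = 0) (φ : ℝ) : f φ = 0 := by
  refine eq_zero_of_integral_mul_cos_sin_eq_zero hf hper (fun n => ?_) (fun n => ?_) φ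
  · simpa only [azimuthal_natCast] using h n
  · rcases eq_or_ne n 0 with rfl | hn
    · simp
    · simpa only [azimuthal_neg_natCast n _ hn] using h (-n)

end Trigonometric

section SphericalHarmonics

open Real Polynomial

/-- Integration against the surface measure `sin θ dθ dφ` over the chart `[0, π] × [0, 2π]`, as a
functional on functions of `(θ, φ)` with locally uniform convergence. -/
def sphereIntegral : C(ℝ × ℝ, ℝ) →L[ℝ] ℝ where
  toFun f := ∫ φ in (0)..(2 * π), ∫ θ in (0)..π, f (θ, φ) * sin θ
  map_add' f g := by
    rw [← intervalIntegral.integral_add]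
    · refine intervalIntegral.integral_congr fun φ _ => ?_
      simp only [ContinuousMap.add_apply, add_mul]
      exact intervalIntegral.integral_add (Continuous.intervalIntegrable (by fun_prop) _ _)
        (Continuous.intervalIntegrable (by fun_prop) _ _)
    all_goals
      refine Continuous.intervalIntegrable ?_ _ _
      apply intervalIntegral.continuous_parametric_intervalIntegral_of_continuous'
      fun_prop
  map_smul' c f := by simp [mul_assoc]
  cont := by
    apply intervalIntegral.continuous_parametric_intervalIntegral_of_continuous'
    apply intervalIntegral.continuous_parametric_intervalIntegral_of_continuous'
    fun_prop

theorem sphereIntegral_apply (f : C(ℝ × ℝ, ℝ)) :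
    sphereIntegral f = ∫ φ in (0)..(2 * π), ∫ θ in (0)..π, f (θ, φ) * sin θ := rfl

theorem sphereIntegral_congr {f g : C(ℝ × ℝ, ℝ)}
    (h : ∀ θ ∈ Set.Icc 0 π, ∀ φ ∈ Set.Icc 0 (2 * π), f (θ, φ) = g (θ, φ)) :
    sphereIntegral f = sphereIntegral g := by
  rw [sphereIntegral_apply, sphereIntegral_apply]
  refine intervalIntegral.integral_congr fun φ hφ => intervalIntegral.integral_congr fun θ hθ => ?_
  rw [Set.uIcc_of_le (by positivity)] at hφ hθ
  simp only [h θ hθ φ hφ]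

theorem sphereIntegral_mono {f g : C(ℝ × ℝ, ℝ)} (h : ∀ p, f p ≤ g p) :
    sphereIntegral f ≤ sphereIntegral g := by
  rw [sphereIntegral_apply, sphereIntegral_apply]
  refine intervalIntegral.integral_mono_on (by positivity) ?_ ?_ fun φ _ =>
    intervalIntegral.integral_mono_on (by positivity) ?_ ?_ fun θ hθ =>
      mul_le_mul_of_nonneg_right (h _) (sin_nonneg_of_mem_Icc hθ)
  iterate 2
    refine Continuous.intervalIntegrable ?_ _ _
    apply intervalIntegral.continuous_parametric_intervalIntegral_of_continuous'
    fun_prop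
  iterate 2 exact Continuous.intervalIntegrable (by fun_prop) _ _

theorem sphereIntegral_mul_self_nonneg (f : C(ℝ × ℝ, ℝ)) : 0 ≤ sphereIntegral (f * f) := by
  rw [← map_zero sphereIntegral]
  exact sphereIntegral_mono fun p => mul_self_nonneg (f p)

theorem integral_comp_cos_mul_sin {f : ℝ → ℝ} (hf : Continuous f) :
    ∫ θ in (0)..π, f (cos θ) * sin θ = ∫ x in (-1)..1, f x := by
  have h := intervalIntegral.integral_comp_mul_deriv (a := 0) (b := π)
    (fun x _ => hasDerivAt_cos x) (by fun_prop) hf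
  simp only [Function.comp_apply, mul_neg, intervalIntegral.integral_neg, cos_zero, cos_pi] at h
  rw [intervalIntegral.integral_symm 1 (-1), ← h, neg_neg]

theorem sphereIntegral_of_forall_eq_mul {f : C(ℝ × ℝ, ℝ)} (h t : ℝ → ℝ)
    (hf : ∀ θ φ, f (θ, φ) = h θ * t φ) :
    sphereIntegral f = (∫ θ in (0)..π, h θ * sin θ) * ∫ φ in (0)..(2 * π), t φ := by
  rw [sphereIntegral_apply, ← intervalIntegral.integral_const_mul]
  refine intervalIntegral.integral_congr fun φ _ => ?_
  rw [← intervalIntegral.integral_mul_const]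
  refine intervalIntegral.integral_congr fun θ _ => ?_
  simp only [hf]
  ring

theorem sphereIntegral_of_forall_eq_eval_cos_mul {f : C(ℝ × ℝ, ℝ)} (p : ℝ[X]) (t : ℝ → ℝ)
    (hf : ∀ θ φ, f (θ, φ) = p.eval (cos θ) * t φ) :
    sphereIntegral f = weightedIntegral 1 p * ∫ φ in (0)..(2 * π), t φ := by
  rw [sphereIntegral_of_forall_eq_mul _ _ hf, integral_comp_cos_mul_sin p.continuous]
  simp only [weightedIntegral_apply, ContinuousMap.one_apply, one_mul]

/-- The constant normalizing the real spherical harmonic of degree `n` and order `m`. -/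
def harmonicNorm (n : ℕ) (m : ℤ) : ℝ :=
  √(neumannFactor m * ((2 * n + 1) / (4 * π) * factorialRatio n m.natAbs))

theorem harmonicNorm_pos (n : ℕ) (m : ℤ) : 0 < harmonicNorm n m := by
  have := neumannFactor_pos m
  have := factorialRatio_pos n m.natAbs
  unfold harmonicNorm
  positivity

theorem harmonicNorm_sq (n : ℕ) (m : ℤ) : harmonicNorm n m ^ 2 =
    neumannFactor m * ((2 * n + 1) / (4 * π) * factorialRatio n m.natAbs) := by
  have := neumannFactor_pos m
  have := factorialRatio_pos n m.natAbs
  exact sq_sqrt (by positivity)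

/-- The real spherical harmonic `Ynm n m` as a continuous function of `(θ, φ)`, with its polynomial
and trigonometric factors displayed. -/
def sphericalHarmonic (n : ℕ) (m : ℤ) : C(ℝ × ℝ, ℝ) where
  toFun p := harmonicNorm n m * |sin p.1| ^ m.natAbs *
    (legendreDeriv n m.natAbs).eval (cos p.1) * azimuthal m p.2

theorem sphericalHarmonic_apply (n : ℕ) (m : ℤ) (θ φ : ℝ) : sphericalHarmonic n m (θ, φ) =
    harmonicNorm n m * |sin θ| ^ m.natAbs * (legendreDeriv n m.natAbs).eval (cos θ) *
      azimuthal m φ := rfl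

theorem assocLegP_cos (n m : ℕ) (θ : ℝ) :
    assocLegP n m (cos θ) = (-1) ^ m * |sin θ| ^ m * (legendreDeriv n m).eval (cos θ) := by
  rw [assocLegP, iteratedDeriv_legP, ← sin_sq, ← sq_abs, ← rpow_natCast |sin θ| 2,
    ← rpow_mul (abs_nonneg _), ← rpow_natCast |sin θ| m]
  congr 3
  push_cast
  ring

theorem sphericalHarmonic_eq_Ynm (n : ℕ) (m : ℤ) (θ φ : ℝ) :
    sphericalHarmonic n m (θ, φ) = Ynm n m θ φ := by
  rw [sphericalHarmonic_apply, harmonicNorm, Ynm, neumannFactor]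
  split_ifs with hzero hpos
  · simp [hzero, azimuthal, azimuthalPhase, legP_eq_eval]
  · lift m to ℕ using hpos.le
    rw [assocLegP_cos, azimuthal_natCast, sqrt_mul zero_le_two, Int.natAbs_natCast, factorialRatio]
    rcases neg_one_pow_eq_or ℝ m with hsign | hsign <;> rw [hsign] <;> ring
  · obtain ⟨m, rfl⟩ : ∃ j : ℕ, m = -j := ⟨m.natAbs, by omega⟩
    rw [assocLegP_cos, azimuthal_neg_natCast _ _ (by omega), sqrt_mul zero_le_two, Int.natAbs_neg,
      Int.natAbs_natCast, factorialRatio]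
    rcases neg_one_pow_eq_or ℝ m with hsign | hsign <;> rw [hsign] <;> ring

theorem coeff_eq_sphereIntegral (f : C(ℝ × ℝ, ℝ)) (n : ℕ) (m : ℤ) :
    _root_.coeff (fun θ φ => f (θ, φ)) n m = sphereIntegral (f * sphericalHarmonic n m) := by
  simp only [_root_.coeff, sInner, sphereIntegral_apply, ContinuousMap.mul_apply,
    sphericalHarmonic_eq_Ynm]

theorem abs_sin_pow_two_mul (θ : ℝ) (j : ℕ) : |sin θ| ^ (2 * j) = (1 - cos θ ^ 2) ^ j := by
  rw [pow_mul, sq_abs, sin_sq]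

theorem sphereIntegral_sphericalHarmonic_mul_same_order (n n' : ℕ) (m : ℤ) :
    sphereIntegral (sphericalHarmonic n m * sphericalHarmonic n' m) =
      harmonicNorm n m * harmonicNorm n' m * weightedIntegral 1
        ((1 - X ^ 2) ^ m.natAbs * legendreDeriv n m.natAbs * legendreDeriv n' m.natAbs) *
          ∫ φ in (0)..(2 * π), azimuthal m φ * azimuthal m φ := by
  rw [← smul_eq_mul (harmonicNorm n m * _), ← map_smul]
  refine sphereIntegral_of_forall_eq_eval_cos_mul _ _ fun θ φ => ?_
  simp only [ContinuousMap.mul_apply, sphericalHarmonic_apply, eval_smul, eval_mul, eval_pow,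
    eval_sub, eval_one, eval_X, smul_eq_mul, ← abs_sin_pow_two_mul]
  ring

theorem sphereIntegral_sphericalHarmonic_mul_eq_zero_of_lt {n n' : ℕ} {m : ℤ} (hn : n' < n)
    (hm : m.natAbs ≤ n') : sphereIntegral (sphericalHarmonic n m * sphericalHarmonic n' m) = 0 := by
  have hdeg : (legendreDeriv n' m.natAbs).natDegree + m.natAbs < n := by
    have := natDegree_legendreDeriv_le n' m.natAbs
    omega
  rw [sphereIntegral_sphericalHarmonic_mul_same_order,
    weightedIntegral_one_legendreDeriv_mul_eq_zero hdeg, mul_zero, zero_mul]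

theorem sphereIntegral_sphericalHarmonic_mul_eq_zero_of_order_ne (n n' : ℕ) {m m' : ℤ}
    (h : m ≠ m') : sphereIntegral (sphericalHarmonic n m * sphericalHarmonic n' m') = 0 := by
  rw [sphereIntegral_of_forall_eq_mul
    (fun θ => harmonicNorm n m * |sin θ| ^ m.natAbs * (legendreDeriv n m.natAbs).eval (cos θ) *
      (harmonicNorm n' m' * |sin θ| ^ m'.natAbs * (legendreDeriv n' m'.natAbs).eval (cos θ)))
    (fun φ => azimuthal m φ * azimuthal m' φ) fun θ φ => ?_,
    integral_azimuthal_mul_eq_zero h, mul_zero]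
  simp only [ContinuousMap.mul_apply, sphericalHarmonic_apply]
  ring

theorem sphereIntegral_sphericalHarmonic_sq {n : ℕ} {m : ℤ} (h : m.natAbs ≤ n) :
    sphereIntegral (sphericalHarmonic n m * sphericalHarmonic n m) = 1 := by
  have hpolar := weightedIntegral_one_assocLegendreSq h
  have hazim := neumannFactor_mul_integral_azimuthal_sq m
  rw [assocLegendreSq, map_smul, smul_eq_mul] at hpolar
  rw [sphereIntegral_sphericalHarmonic_mul_same_order, ← sq, harmonicNorm_sq]
  calc _ = (2 * n + 1) / (4 * π) * (factorialRatio n m.natAbs * weightedIntegral 1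
        ((1 - X ^ 2) ^ m.natAbs * legendreDeriv n m.natAbs * legendreDeriv n m.natAbs)) *
        (neumannFactor m * ∫ φ in (0)..(2 * π), azimuthal m φ * azimuthal m φ) := by ring
    _ = 1 := by
      rw [hpolar, hazim]
      field_simp
      norm_num

theorem mem_Icc_neg_natCast {n : ℕ} {m : ℤ} :
    m ∈ Finset.Icc (-(n : ℤ)) n ↔ m.natAbs ≤ n := by
  rw [Finset.mem_Icc]
  omega

theorem sphereIntegral_sphericalHarmonic_mul {n n' : ℕ} {m m' : ℤ}
    (hm : m ∈ Finset.Icc (-(n : ℤ)) n) (hm' : m' ∈ Finset.Icc (-(n' : ℤ)) n') :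
    sphereIntegral (sphericalHarmonic n m * sphericalHarmonic n' m') =
      if n = n' ∧ m = m' then 1 else 0 := by
  rw [mem_Icc_neg_natCast] at hm hm'
  split_ifs with h
  · obtain ⟨rfl, rfl⟩ := h
    exact sphereIntegral_sphericalHarmonic_sq hm
  · rcases eq_or_ne m m' with rfl | hne
    · rcases lt_trichotomy n n' with hlt | rfl | hlt
      · rw [mul_comm]
        exact sphereIntegral_sphericalHarmonic_mul_eq_zero_of_lt hlt hm
      · exact absurd ⟨rfl, rfl⟩ h
      · exact sphereIntegral_sphericalHarmonic_mul_eq_zero_of_lt hlt hm'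
    · exact sphereIntegral_sphericalHarmonic_mul_eq_zero_of_order_ne n n' hne

-- If the orders satisfy no relation `|m| = ||m₁| ± |m₂||`, the longitude integral vanishes.
-- Otherwise `|m₁| + |m₂| - |m|` is even, so `|sin θ|` occurs to an even power and the colatitude
-- integral is that of a Legendre derivative against a polynomial of too small degree.
theorem sphereIntegral_sphericalHarmonic_mul_mul_eq_zero_of_add_lt {n₁ n₂ n : ℕ} {m₁ m₂ m : ℤ}
    (h₁ : m₁.natAbs ≤ n₁) (h₂ : m₂.natAbs ≤ n₂) (hn : n₁ + n₂ < n) :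
    sphereIntegral (sphericalHarmonic n₁ m₁ * sphericalHarmonic n₂ m₂ * sphericalHarmonic n m)
      = 0 := by
  by_cases horder : ((m₁.natAbs : ℤ) - m₂.natAbs).natAbs ≠ m.natAbs ∧
      m₁.natAbs + m₂.natAbs ≠ m.natAbs
  · rw [sphereIntegral_of_forall_eq_mul
      (fun θ => harmonicNorm n₁ m₁ * |sin θ| ^ m₁.natAbs *
        (legendreDeriv n₁ m₁.natAbs).eval (cos θ) * (harmonicNorm n₂ m₂ * |sin θ| ^ m₂.natAbs *
        (legendreDeriv n₂ m₂.natAbs).eval (cos θ)) * (harmonicNorm n m * |sin θ| ^ m.natAbs *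
        (legendreDeriv n m.natAbs).eval (cos θ)))
      (fun φ => azimuthal m₁ φ * azimuthal m₂ φ * azimuthal m φ) fun θ φ => ?_,
      integral_azimuthal_mul_mul_eq_zero horder.1 horder.2, mul_zero]
    simp only [ContinuousMap.mul_apply, sphericalHarmonic_apply]
    ring
  · obtain ⟨j, hj⟩ : ∃ j, m₁.natAbs + m₂.natAbs = m.natAbs + 2 * j := by
      by_cases hadd : m₁.natAbs + m₂.natAbs = m.natAbs
      · exact ⟨0, by omega⟩
      · exact ⟨min m₁.natAbs m₂.natAbs, by omega⟩
    set q : ℝ[X] := (1 - X ^ 2) ^ j * legendreDeriv n₁ m₁.natAbs * legendreDeriv n₂ m₂.natAbs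
    have hq : q.natDegree ≤ j * 2 + (n₁ - m₁.natAbs) + (n₂ - m₂.natAbs) :=
      natDegree_mul_le_of_le (natDegree_mul_le_of_le
        (natDegree_pow_le_of_le j (by compute_degree)) (natDegree_legendreDeriv_le _ _))
        (natDegree_legendreDeriv_le _ _)
    rw [sphereIntegral_of_forall_eq_eval_cos_mul
      ((harmonicNorm n₁ m₁ * harmonicNorm n₂ m₂ * harmonicNorm n m) •
        ((1 - X ^ 2) ^ m.natAbs * legendreDeriv n m.natAbs * q))
      (fun φ => azimuthal m₁ φ * azimuthal m₂ φ * azimuthal m φ) fun θ φ => ?_, map_smul,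
      weightedIntegral_one_legendreDeriv_mul_eq_zero (by omega), smul_zero, zero_mul]
    have hsin : |sin θ| ^ m₁.natAbs * |sin θ| ^ m₂.natAbs * |sin θ| ^ m.natAbs =
        (1 - cos θ ^ 2) ^ m.natAbs * (1 - cos θ ^ 2) ^ j := by
      rw [← pow_add, hj, ← pow_add, ← pow_add, ← abs_sin_pow_two_mul]
      congr 1
      ring
    simp only [q, ContinuousMap.mul_apply, sphericalHarmonic_apply, eval_smul, eval_mul, eval_pow,
      eval_sub, eval_one, eval_X, smul_eq_mul]
    linear_combination (harmonicNorm n₁ m₁ * harmonicNorm n₂ m₂ * harmonicNorm n m *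
      (legendreDeriv n₁ m₁.natAbs).eval (cos θ) * (legendreDeriv n₂ m₂.natAbs).eval (cos θ) *
      (legendreDeriv n m.natAbs).eval (cos θ) *
      (azimuthal m₁ φ * azimuthal m₂ φ * azimuthal m φ)) * hsin

/-- The triangle inequalities that the degrees of three spherical harmonics satisfy unless the
integral of their product vanishes. -/
def IsTriangle (n₁ n₂ n : ℕ) : Prop := n ≤ n₁ + n₂ ∧ n₂ ≤ n + n₁ ∧ n₁ ≤ n + n₂

theorem sphereIntegral_sphericalHarmonic_mul_mul_eq_zero {n₁ n₂ n : ℕ} {m₁ m₂ m : ℤ}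
    (h₁ : m₁ ∈ Finset.Icc (-(n₁ : ℤ)) n₁) (h₂ : m₂ ∈ Finset.Icc (-(n₂ : ℤ)) n₂)
    (h : m ∈ Finset.Icc (-(n : ℤ)) n) (hn : ¬IsTriangle n₁ n₂ n) :
    sphereIntegral (sphericalHarmonic n₁ m₁ * sphericalHarmonic n₂ m₂ * sphericalHarmonic n m)
      = 0 := by
  rw [mem_Icc_neg_natCast] at h₁ h₂ h
  obtain hlt | hlt | hlt : n₁ + n₂ < n ∨ n + n₁ < n₂ ∨ n + n₂ < n₁ := by
    unfold IsTriangle at hn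
    omega
  · exact sphereIntegral_sphericalHarmonic_mul_mul_eq_zero_of_add_lt h₁ h₂ hlt
  · rw [mul_comm, ← mul_assoc]
    exact sphereIntegral_sphericalHarmonic_mul_mul_eq_zero_of_add_lt h h₁ hlt
  · rw [mul_assoc, mul_comm, mul_comm (sphericalHarmonic n₂ m₂)]
    exact sphereIntegral_sphericalHarmonic_mul_mul_eq_zero_of_add_lt h h₂ hlt

theorem sum_Icc_neg_natCast {M : Type*} [AddCommMonoid M] (n : ℕ) (f : ℤ → M) :
    ∑ m ∈ Finset.Icc (-(n : ℤ)) n, f m =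
      f 0 + ∑ j ∈ Finset.range n, (f (j + 1 : ℕ) + f (-(j + 1 : ℕ))) := by
  induction n with
  | zero => simp
  | succ n ih =>
    have hinsert : Finset.Icc (-((n + 1 : ℕ) : ℤ)) (n + 1 : ℕ) =
        insert ((n + 1 : ℕ) : ℤ) (insert (-((n + 1 : ℕ) : ℤ)) (Finset.Icc (-(n : ℤ)) n)) := by
      ext m
      simp only [Finset.mem_insert, Finset.mem_Icc]
      omega
    rw [Finset.sum_range_succ, ← add_assoc, ← ih, hinsert, Finset.sum_insert, Finset.sum_insert,
      ← add_assoc, add_comm]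
    · simp
    · simp only [Finset.mem_insert, Finset.mem_Icc]
      omega

theorem sphericalHarmonic_zero_sq (n : ℕ) (θ φ : ℝ) : sphericalHarmonic n 0 (θ, φ) ^ 2 =
    (2 * n + 1) / (4 * π) * (assocLegendreSq n 0).eval (cos θ) := by
  have hnorm : harmonicNorm n 0 ^ 2 = (2 * n + 1) / (4 * π) := by
    simp [harmonicNorm_sq, neumannFactor]
  simp only [sphericalHarmonic_apply, azimuthal, azimuthalPhase, assocLegendreSq, lt_irrefl,
    if_false, Int.natAbs_zero, pow_zero, factorialRatio_zero, one_smul, one_mul, mul_one,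
    Nat.cast_zero, Int.cast_zero, zero_mul, sub_zero, cos_zero, eval_mul]
  linear_combination (legendreDeriv n 0).eval (cos θ) ^ 2 * hnorm

theorem sphericalHarmonic_sq_add_neg_sq (n : ℕ) {m : ℕ} (hm : m ≠ 0) (θ φ : ℝ) :
    sphericalHarmonic n m (θ, φ) ^ 2 + sphericalHarmonic n (-m) (θ, φ) ^ 2 =
      (2 * n + 1) / (4 * π) * (2 * (assocLegendreSq n m).eval (cos θ)) := by
  have hnorm (l : ℤ) (hl : l ≠ 0) (hlm : l.natAbs = m) :
      harmonicNorm n l ^ 2 = 2 * ((2 * n + 1) / (4 * π) * factorialRatio n m) := by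
    rw [harmonicNorm_sq, neumannFactor, if_neg hl, hlm]
  simp only [sphericalHarmonic_apply, mul_pow, Int.natAbs_neg, Int.natAbs_natCast,
    hnorm m (by omega) (by omega), hnorm (-m) (by omega) (by omega), assocLegendreSq, eval_smul,
    eval_mul, eval_pow, eval_sub, eval_one, eval_X, smul_eq_mul, ← sin_sq, ← sq_abs (sin θ)]
  linear_combination (2 * ((2 * n + 1) / (4 * π) * factorialRatio n m) * (|sin θ| ^ m) ^ 2 *
    (legendreDeriv n m).eval (cos θ) ^ 2) * azimuthal_natCast_sq_add_neg_sq hm φ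

theorem sum_sphericalHarmonic_sq (n : ℕ) (p : ℝ × ℝ) :
    ∑ m ∈ Finset.Icc (-(n : ℤ)) n, sphericalHarmonic n m p ^ 2 = (2 * n + 1) / (4 * π) := by
  have h := congrArg (eval (cos p.1)) (assocLegendreSq_zero_add_two_mul_sum n)
  simp only [eval_add, eval_mul, eval_ofNat, eval_finsetSum, eval_one] at h
  rw [sum_Icc_neg_natCast, sphericalHarmonic_zero_sq, Finset.sum_congr rfl fun j _ =>
    sphericalHarmonic_sq_add_neg_sq n j.succ_ne_zero p.1 p.2, ← Finset.mul_sum, ← Finset.mul_sum,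
    ← mul_add, h, mul_one]

end SphericalHarmonics

section DegreeComponents

open Real

/-- The orthogonal projection of `f` onto the spherical harmonics of degree `n`. -/
def harmonicProj (n : ℕ) (f : C(ℝ × ℝ, ℝ)) : C(ℝ × ℝ, ℝ) :=
  ∑ m ∈ Finset.Icc (-(n : ℤ)) n,
    sphereIntegral (f * sphericalHarmonic n m) • sphericalHarmonic n m

/-- The part `∑_m |f_n^m|²` of the squared `L²` norm of `f` carried by degree `n`. -/
def harmonicEnergy (n : ℕ) (f : C(ℝ × ℝ, ℝ)) : ℝ :=
  ∑ m ∈ Finset.Icc (-(n : ℤ)) n, sphereIntegral (f * sphericalHarmonic n m) ^ 2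

theorem harmonicEnergy_nonneg (n : ℕ) (f : C(ℝ × ℝ, ℝ)) : 0 ≤ harmonicEnergy n f :=
  Finset.sum_nonneg fun _ _ => sq_nonneg _

theorem harmonicEnergy_add_le (n : ℕ) (f g : C(ℝ × ℝ, ℝ)) :
    harmonicEnergy n (f + g) ≤ 2 * (harmonicEnergy n f + harmonicEnergy n g) := by
  simp only [harmonicEnergy, ← Finset.sum_add_distrib, Finset.mul_sum, add_mul, map_add]
  exact Finset.sum_le_sum fun m _ => add_sq_le

theorem harmonicEnergy_sum_le {ι : Type*} (n : ℕ) (I : Finset ι) (f : ι → C(ℝ × ℝ, ℝ)) {z : ι → ℝ}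
    (hz : ∀ i ∈ I, 0 < z i) :
    harmonicEnergy n (∑ i ∈ I, f i) ≤ (∑ i ∈ I, z i) * ∑ i ∈ I, harmonicEnergy n (f i) / z i := by
  simp only [harmonicEnergy, Finset.sum_mul, map_sum, Finset.sum_div]
  rw [Finset.sum_comm (s := I), ← Finset.sum_mul, Finset.mul_sum]
  refine Finset.sum_le_sum fun m _ => ?_
  rcases I.eq_empty_or_nonempty with rfl | hI
  · simp
  · rw [mul_comm, ← div_le_iff₀ (Finset.sum_pos hz hI)]
    exact Finset.sq_sum_div_le_sum_sq_div I _ hz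

theorem sphereIntegral_mul_harmonicProj (n : ℕ) (f g : C(ℝ × ℝ, ℝ)) :
    sphereIntegral (g * harmonicProj n f) = ∑ m ∈ Finset.Icc (-(n : ℤ)) n,
      sphereIntegral (f * sphericalHarmonic n m) * sphereIntegral (g * sphericalHarmonic n m) := by
  simp only [harmonicProj, Finset.mul_sum, map_sum, mul_smul_comm, map_smul, smul_eq_mul]

theorem sphereIntegral_harmonicProj_mul_sphericalHarmonic (n : ℕ) (f : C(ℝ × ℝ, ℝ)) {n' : ℕ}
    {m : ℤ} (hm : m ∈ Finset.Icc (-(n' : ℤ)) n') :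
    sphereIntegral (harmonicProj n f * sphericalHarmonic n' m) =
      if n = n' then sphereIntegral (f * sphericalHarmonic n m) else 0 := by
  rw [mul_comm, sphereIntegral_mul_harmonicProj, Finset.sum_congr rfl fun l hl => by
    rw [sphereIntegral_sphericalHarmonic_mul hm hl]]
  split_ifs with h
  · subst h
    simp only [true_and, mul_ite, mul_one, mul_zero, Finset.sum_ite_eq, if_pos hm]
  · simp only [Ne.symm h, false_and, if_false, mul_zero, Finset.sum_const_zero]

theorem sphereIntegral_sum_harmonicProj_sq (f : C(ℝ × ℝ, ℝ)) (S : Finset ℕ) :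
    sphereIntegral ((∑ n ∈ S, harmonicProj n f) * ∑ n ∈ S, harmonicProj n f) =
      ∑ n ∈ S, harmonicEnergy n f := by
  rw [Finset.mul_sum, map_sum]
  refine Finset.sum_congr rfl fun n hn => ?_
  rw [sphereIntegral_mul_harmonicProj, harmonicEnergy]
  refine Finset.sum_congr rfl fun m hm => ?_
  simp only [Finset.sum_mul, map_sum, sphereIntegral_harmonicProj_mul_sphericalHarmonic _ f hm,
    Finset.sum_ite_eq', if_pos hn, sq]

theorem harmonicEnergy_le_sphereIntegral (n : ℕ) (f : C(ℝ × ℝ, ℝ)) :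
    harmonicEnergy n f ≤ sphereIntegral (f * f) := by
  have hself : sphereIntegral (harmonicProj n f * harmonicProj n f) = harmonicEnergy n f := by
    simpa only [Finset.sum_singleton] using sphereIntegral_sum_harmonicProj_sq f {n}
  have hcross : sphereIntegral (f * harmonicProj n f) = harmonicEnergy n f := by
    simp only [sphereIntegral_mul_harmonicProj, harmonicEnergy, sq]
  have hexpand : (f - harmonicProj n f) * (f - harmonicProj n f) =
      f * f - f * harmonicProj n f - (f * harmonicProj n f - harmonicProj n f * harmonicProj n f) :=
    by ring
  have h := sphereIntegral_mul_self_nonneg (f - harmonicProj n f)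
  rw [hexpand, map_sub, map_sub, map_sub, hself, hcross] at h
  linarith

theorem harmonicProj_apply (n : ℕ) (f : C(ℝ × ℝ, ℝ)) (p : ℝ × ℝ) : harmonicProj n f p =
    ∑ m ∈ Finset.Icc (-(n : ℤ)) n,
      sphereIntegral (f * sphericalHarmonic n m) * sphericalHarmonic n m p := by
  simp only [harmonicProj, ContinuousMap.sum_apply, ContinuousMap.smul_apply, smul_eq_mul]

theorem harmonicProj_apply_sq_le (n : ℕ) (f : C(ℝ × ℝ, ℝ)) (p : ℝ × ℝ) :
    harmonicProj n f p ^ 2 ≤ harmonicEnergy n f * ((2 * n + 1) / (4 * π)) := by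
  rw [harmonicProj_apply, ← sum_sphericalHarmonic_sq n p]
  exact Finset.sum_mul_sq_le_sq_mul_sq _ _ _

theorem harmonicProj_add_two_pi (n : ℕ) (f : C(ℝ × ℝ, ℝ)) (θ φ : ℝ) :
    harmonicProj n f (θ, φ + 2 * π) = harmonicProj n f (θ, φ) := by
  simp only [harmonicProj_apply, sphericalHarmonic_apply, azimuthal_add_two_pi]

theorem sphereIntegral_harmonicProj_mul_sq_le (n : ℕ) (f g : C(ℝ × ℝ, ℝ)) :
    sphereIntegral (harmonicProj n f * g * (harmonicProj n f * g)) ≤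
      harmonicEnergy n f * ((2 * n + 1) / (4 * π)) * sphereIntegral (g * g) := by
  rw [← smul_eq_mul _ (sphereIntegral (g * g)), ← map_smul]
  refine sphereIntegral_mono fun p => ?_
  calc harmonicProj n f p * g p * (harmonicProj n f p * g p)
      = harmonicProj n f p ^ 2 * (g p * g p) := by ring
    _ ≤ _ := mul_le_mul_of_nonneg_right (harmonicProj_apply_sq_le n f p) (mul_self_nonneg _)

theorem harmonicEnergy_harmonicProj_mul_sum_le (n i : ℕ) (u v : C(ℝ × ℝ, ℝ)) (S : Finset ℕ) :
    harmonicEnergy n (harmonicProj i u * ∑ j ∈ S, harmonicProj j v) ≤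
      harmonicEnergy i u * ((2 * i + 1) / (4 * π)) * ∑ j ∈ S, harmonicEnergy j v := by
  rw [← sphereIntegral_sum_harmonicProj_sq v S]
  exact (harmonicEnergy_le_sphereIntegral n _).trans (sphereIntegral_harmonicProj_mul_sq_le i u _)

theorem sphereIntegral_harmonicProj_mul_harmonicProj_mul_eq_zero (u v : C(ℝ × ℝ, ℝ)) {i j n : ℕ}
    {m : ℤ} (hm : m ∈ Finset.Icc (-(n : ℤ)) n) (h : ¬IsTriangle i j n) :
    sphereIntegral (harmonicProj i u * harmonicProj j v * sphericalHarmonic n m) = 0 := by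
  rw [harmonicProj, harmonicProj, Finset.sum_mul_sum]
  simp only [Finset.sum_mul, map_sum, smul_mul_assoc, mul_smul_comm, map_smul]
  refine Finset.sum_eq_zero fun l hl => Finset.sum_eq_zero fun l' hl' => ?_
  rw [sphereIntegral_sphericalHarmonic_mul_mul_eq_zero hl hl' hm h, smul_zero, smul_zero]

end DegreeComponents

section Paraproduct

open Real

theorem one_le_muSp (n : ℕ) : 1 ≤ muSp n := by
  unfold muSp
  linarith [show (0 : ℝ) ≤ n * (n + 1) by positivity]

theorem muSp_pos (n : ℕ) : 0 < muSp n := one_pos.trans_le (one_le_muSp n)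

theorem muSp_le_four_mul {n j : ℕ} (h : n ≤ 2 * j) : muSp n ≤ 4 * muSp j := by
  have hn : (n : ℝ) ≤ 2 * j := by exact_mod_cast h
  have hmul : (n : ℝ) * (n + 1) ≤ 2 * j * (2 * j + 1) := by gcongr
  unfold muSp
  linarith [show (0 : ℝ) ≤ j from j.cast_nonneg]

theorem sqrt_muSp_le_add {n i j : ℕ} (h : n ≤ i + j) : √(muSp n) ≤ √(muSp i) + √(muSp j) := by
  have hn : (n : ℝ) ≤ i + j := by exact_mod_cast h
  have hmul : (n : ℝ) * (n + 1) ≤ (i + j) * (i + j + 1) := by gcongr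
  have hle (l : ℕ) : (l : ℝ) ≤ √(muSp l) := by
    refine le_sqrt_of_sq_le ?_
    unfold muSp
    linarith [show (0 : ℝ) ≤ l from l.cast_nonneg]
  have hprod : (i : ℝ) * j ≤ √(muSp i) * √(muSp j) := by gcongr <;> exact hle _
  rw [sqrt_le_left (by positivity), add_sq, sq_sqrt (muSp_pos i).le, sq_sqrt (muSp_pos j).le]
  unfold muSp at hprod ⊢
  linarith

/-- The weight `μ_n^k e^{2λ√μ_n}` of the Gevrey norm. -/
def gevreyWeight (k lam : ℝ) (n : ℕ) : ℝ := muSp n ^ k * exp (2 * lam * √(muSp n))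

theorem gevreyWeight_pos (k lam : ℝ) (n : ℕ) : 0 < gevreyWeight k lam n :=
  mul_pos (rpow_pos_of_pos (muSp_pos n) k) (exp_pos _)

theorem gevreyWeight_le {k lam : ℝ} (hk : 0 ≤ k) (hlam : 0 ≤ lam) {n i j : ℕ} (h : n ≤ 2 * j)
    (hadd : n ≤ i + j) :
    gevreyWeight k lam n ≤ 4 ^ k * exp (2 * lam * √(muSp i)) * gevreyWeight k lam j := by
  have hpow : muSp n ^ k ≤ 4 ^ k * muSp j ^ k := by
    rw [← mul_rpow zero_le_four (muSp_pos j).le]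
    exact rpow_le_rpow (muSp_pos n).le (muSp_le_four_mul h) hk
  have hexp : exp (2 * lam * √(muSp n)) ≤
      exp (2 * lam * √(muSp i)) * exp (2 * lam * √(muSp j)) := by
    rw [← exp_add, ← mul_add]
    gcongr
    exact sqrt_muSp_le_add hadd
  have := (rpow_pos_of_pos (muSp_pos n) k).le
  calc gevreyWeight k lam n
      ≤ 4 ^ k * muSp j ^ k * (exp (2 * lam * √(muSp i)) * exp (2 * lam * √(muSp j))) :=
        mul_le_mul hpow hexp (exp_pos _).le (this.trans hpow)
    _ = _ := by rw [gevreyWeight]; ring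

/-- The Cauchy–Schwarz weight `(2n + 1)² / μ_n^k`. One factor `2n + 1` comes from the sup norm of
the degree `n` component, the other from the number of degrees in a product with it. -/
def sobolevWeight (k : ℝ) (n : ℕ) : ℝ := (2 * n + 1) ^ 2 / muSp n ^ k

theorem sobolevWeight_pos (k : ℝ) (n : ℕ) : 0 < sobolevWeight k n :=
  div_pos (by positivity) (rpow_pos_of_pos (muSp_pos n) k)

theorem sobolevWeight_mul_gevreyWeight (k lam : ℝ) (n : ℕ) :
    sobolevWeight k n * gevreyWeight k lam n = (2 * n + 1) ^ 2 * exp (2 * lam * √(muSp n)) := by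
  have := (rpow_pos_of_pos (muSp_pos n) k).ne'
  rw [sobolevWeight, gevreyWeight]
  field_simp

theorem summable_sobolevWeight {k : ℝ} (hk : 3 / 2 < k) : Summable (sobolevWeight k) := by
  rw [← summable_nat_add_iff 1]
  have hsum : Summable fun n : ℕ => 4 * ((n + 1 : ℕ) : ℝ) ^ (2 - 2 * k) :=
    ((summable_nat_add_iff 1).2 (summable_nat_rpow.2 (by linarith))).mul_left 4
  refine hsum.of_nonneg_of_le (fun n => (sobolevWeight_pos _ _).le) fun n => ?_
  set x : ℝ := ((n + 1 : ℕ) : ℝ)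
  have hx : 0 < x := by positivity
  have hmu : muSp (n + 1) = x * (x + 1) + 1 := rfl
  have hpos := muSp_pos (n + 1)
  calc sobolevWeight k (n + 1) ≤ 4 * muSp (n + 1) / muSp (n + 1) ^ k :=
        div_le_div_of_nonneg_right (by rw [hmu]; linarith) (rpow_pos_of_pos hpos k).le
    _ = 4 * muSp (n + 1) ^ (1 - k) := by rw [rpow_sub hpos, rpow_one, mul_div_assoc]
    _ ≤ 4 * (x ^ 2) ^ (1 - k) := by
        gcongr 4 * ?_
        exact rpow_le_rpow_of_nonpos (by positivity) (by rw [hmu]; linarith) (by linarith)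
    _ = 4 * x ^ (2 - 2 * k) := by
        rw [← rpow_natCast, ← rpow_mul hx.le]
        congr 2
        push_cast
        ring

/-- The degrees for which the degree `n` part of a product is estimated with `j` as the higher
frequency. -/
def IsLowHigh (n i j : ℕ) : Prop := IsTriangle i j n ∧ n ≤ 2 * j

/-- The sum of the products of a degree `i` component of `u` and a degree `j` component of `v` over
the pairs of degrees in `I` related by `R`. -/
def paraproduct (R : ℕ → ℕ → Prop) [∀ i, DecidablePred (R i)] (I : Finset ℕ)
    (u v : C(ℝ × ℝ, ℝ)) : C(ℝ × ℝ, ℝ) :=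
  ∑ i ∈ I, harmonicProj i u * ∑ j ∈ I with R i j, harmonicProj j v

theorem card_filter_isTriangle_le (T : Finset ℕ) {P : ℕ → Prop} [DecidablePred P] (i j : ℕ)
    (hP : ∀ n, P n → IsTriangle i j n) : (T.filter P).card ≤ 2 * i + 1 := by
  have hsub : T.filter P ⊆ Finset.Icc (j - i) (j + i) := fun n hn => by
    have := hP n (Finset.mem_filter.1 hn).2
    unfold IsTriangle at this
    rw [Finset.mem_Icc]
    omega
  have h := Finset.card_le_card hsub
  rw [Nat.card_Icc] at h
  omega

section LowHigh

variable {k lam : ℝ} {R : ℕ → ℕ → ℕ → Prop} [∀ n i, DecidablePred (R n i)]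

theorem gevreyWeight_mul_harmonicEnergy_le (hk : 0 ≤ k) (hlam : 0 ≤ lam) (u v : C(ℝ × ℝ, ℝ))
    {n i : ℕ} {S : Finset ℕ} (hS : ∀ j ∈ S, IsLowHigh n i j) :
    gevreyWeight k lam n * harmonicEnergy n (harmonicProj i u * ∑ j ∈ S, harmonicProj j v) ≤
      harmonicEnergy i u * ((2 * i + 1) / (4 * π)) * (4 ^ k * exp (2 * lam * √(muSp i))) *
        ∑ j ∈ S, gevreyWeight k lam j * harmonicEnergy j v := by
  have hu := harmonicEnergy_nonneg i u
  calc _ ≤ gevreyWeight k lam n *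
        (harmonicEnergy i u * ((2 * i + 1) / (4 * π)) * ∑ j ∈ S, harmonicEnergy j v) :=
        mul_le_mul_of_nonneg_left (harmonicEnergy_harmonicProj_mul_sum_le n i u v S)
          (gevreyWeight_pos k lam n).le
    _ = harmonicEnergy i u * ((2 * i + 1) / (4 * π)) *
        ∑ j ∈ S, gevreyWeight k lam n * harmonicEnergy j v := by
        rw [← Finset.mul_sum]
        ring
    _ ≤ harmonicEnergy i u * ((2 * i + 1) / (4 * π)) * ∑ j ∈ S,
        4 ^ k * exp (2 * lam * √(muSp i)) * gevreyWeight k lam j * harmonicEnergy j v := by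
        gcongr with j hj
        · exact harmonicEnergy_nonneg j v
        · exact gevreyWeight_le hk hlam (hS j hj).2 (hS j hj).1.1
    _ = _ := by
        simp only [mul_assoc, Finset.mul_sum]

-- A fixed pair of degrees contributes to at most `2i + 1` degrees of the product.
theorem sum_gevreyWeight_mul_harmonicEnergy_le (hk : 0 ≤ k) (hlam : 0 ≤ lam)
    (hR : ∀ n i j, R n i j → IsLowHigh n i j) (u v : C(ℝ × ℝ, ℝ)) (I T : Finset ℕ)
    (i : ℕ) :
    ∑ n ∈ T, gevreyWeight k lam n *
        harmonicEnergy n (harmonicProj i u * ∑ j ∈ I with R n i j, harmonicProj j v) ≤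
      sobolevWeight k i * (4 ^ k / (4 * π) * (gevreyWeight k lam i * harmonicEnergy i u) *
        ∑ j ∈ I, gevreyWeight k lam j * harmonicEnergy j v) := by
  have hu := harmonicEnergy_nonneg i u
  have hcount : ∑ n ∈ T, ∑ j ∈ I with R n i j, gevreyWeight k lam j * harmonicEnergy j v ≤
      (2 * i + 1) * ∑ j ∈ I, gevreyWeight k lam j * harmonicEnergy j v := by
    simp only [Finset.sum_filter]
    rw [Finset.sum_comm, Finset.mul_sum]
    refine Finset.sum_le_sum fun j _ => ?_
    rw [← Finset.sum_filter, Finset.sum_const, nsmul_eq_mul]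
    refine mul_le_mul_of_nonneg_right ?_
      (mul_nonneg (gevreyWeight_pos k lam j).le (harmonicEnergy_nonneg j v))
    exact_mod_cast card_filter_isTriangle_le T i j fun n hn => (hR n i j hn).1
  calc _ ≤ ∑ n ∈ T, harmonicEnergy i u * ((2 * i + 1) / (4 * π)) *
        (4 ^ k * exp (2 * lam * √(muSp i))) *
        ∑ j ∈ I with R n i j, gevreyWeight k lam j * harmonicEnergy j v :=
        Finset.sum_le_sum fun n _ => gevreyWeight_mul_harmonicEnergy_le hk hlam u v
          fun j hj => hR n i j (Finset.mem_filter.1 hj).2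
    _ ≤ harmonicEnergy i u * ((2 * i + 1) / (4 * π)) * (4 ^ k * exp (2 * lam * √(muSp i))) *
        ((2 * i + 1) * ∑ j ∈ I, gevreyWeight k lam j * harmonicEnergy j v) := by
        rw [← Finset.mul_sum]
        gcongr
    _ = _ := by
        linear_combination (-(4 ^ k / (4 * π) * harmonicEnergy i u *
          ∑ j ∈ I, gevreyWeight k lam j * harmonicEnergy j v)) *
          sobolevWeight_mul_gevreyWeight k lam i

theorem sum_gevreyWeight_mul_harmonicEnergy_paraproduct_le (hk : 0 ≤ k) (hlam : 0 ≤ lam)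
    (hR : ∀ n i j, R n i j → IsLowHigh n i j) (u v : C(ℝ × ℝ, ℝ)) (I T : Finset ℕ) :
    ∑ n ∈ T, gevreyWeight k lam n * harmonicEnergy n (paraproduct (R n) I u v) ≤
      (∑ i ∈ I, sobolevWeight k i) * (4 ^ k / (4 * π)) *
        (∑ n ∈ I, gevreyWeight k lam n * harmonicEnergy n u) *
        ∑ n ∈ I, gevreyWeight k lam n * harmonicEnergy n v := by
  set f : ℕ → ℕ → C(ℝ × ℝ, ℝ) := fun n i =>
    harmonicProj i u * ∑ j ∈ I with R n i j, harmonicProj j v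
  have hZ : 0 ≤ ∑ i ∈ I, sobolevWeight k i :=
    Finset.sum_nonneg fun _ _ => (sobolevWeight_pos k _).le
  calc _ ≤ ∑ n ∈ T, gevreyWeight k lam n *
        ((∑ i ∈ I, sobolevWeight k i) * ∑ i ∈ I, harmonicEnergy n (f n i) / sobolevWeight k i) :=
        Finset.sum_le_sum fun n _ => mul_le_mul_of_nonneg_left
          (harmonicEnergy_sum_le n I _ fun _ _ => sobolevWeight_pos k _) (gevreyWeight_pos _ _ _).le
    _ = (∑ i ∈ I, sobolevWeight k i) * ∑ i ∈ I,
        (∑ n ∈ T, gevreyWeight k lam n * harmonicEnergy n (f n i)) / sobolevWeight k i := by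
        simp only [Finset.sum_div, mul_left_comm _ (∑ i ∈ I, sobolevWeight k i)]
        rw [Finset.sum_comm, ← Finset.mul_sum]
        simp only [Finset.mul_sum, mul_div_assoc]
    _ ≤ (∑ i ∈ I, sobolevWeight k i) * ∑ i ∈ I,
        4 ^ k / (4 * π) * (gevreyWeight k lam i * harmonicEnergy i u) *
        ∑ j ∈ I, gevreyWeight k lam j * harmonicEnergy j v := by
        refine mul_le_mul_of_nonneg_left (Finset.sum_le_sum fun i _ => ?_) hZ
        rw [div_le_iff₀' (sobolevWeight_pos k i)]
        exact sum_gevreyWeight_mul_harmonicEnergy_le hk hlam hR u v I T i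
    _ = _ := by
        rw [← Finset.sum_mul, ← Finset.mul_sum]
        ring

end LowHigh

theorem sphereIntegral_paraproduct_mul (R : ℕ → ℕ → Prop) [∀ i, DecidablePred (R i)]
    (I : Finset ℕ) (u v g : C(ℝ × ℝ, ℝ)) :
    sphereIntegral (paraproduct R I u v * g) = ∑ i ∈ I, ∑ j ∈ I,
      if R i j then sphereIntegral (harmonicProj i u * harmonicProj j v * g) else 0 := by
  simp only [paraproduct, Finset.sum_mul, map_sum, mul_assoc]
  refine Finset.sum_congr rfl fun i _ => ?_
  rw [Finset.mul_sum, map_sum, Finset.sum_filter]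

open Classical in
theorem sphereIntegral_sum_mul_sum_mul_sphericalHarmonic (I : Finset ℕ) (u v : C(ℝ × ℝ, ℝ))
    {n : ℕ} {m : ℤ} (hm : m ∈ Finset.Icc (-(n : ℤ)) n) :
    sphereIntegral ((∑ i ∈ I, harmonicProj i u) * (∑ j ∈ I, harmonicProj j v) *
        sphericalHarmonic n m) =
      sphereIntegral ((paraproduct (IsLowHigh n) I u v +
        paraproduct (fun i j => IsLowHigh n i j ∧ ¬IsLowHigh n j i) I v u) *
          sphericalHarmonic n m) := by
  rw [add_mul, map_add, sphereIntegral_paraproduct_mul, sphereIntegral_paraproduct_mul,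
    Finset.sum_comm (s := I) (f := fun i j => if IsLowHigh n i j ∧ _ then _ else _),
    ← Finset.sum_add_distrib, Finset.sum_mul_sum, Finset.sum_mul, map_sum]
  refine Finset.sum_congr rfl fun i _ => ?_
  rw [← Finset.sum_add_distrib, Finset.sum_mul, map_sum]
  refine Finset.sum_congr rfl fun j _ => ?_
  rw [mul_comm (harmonicProj j v)]
  by_cases hij : IsLowHigh n i j
  · rw [if_pos hij, if_neg fun h => h.2 hij, add_zero]
  by_cases hji : IsLowHigh n j i
  · rw [if_neg hij, if_pos ⟨hji, hij⟩, zero_add]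
  · have htri : ¬IsTriangle i j n := by
      unfold IsLowHigh IsTriangle at *
      omega
    rw [if_neg hij, if_neg fun h => hji h.1, add_zero,
      sphereIntegral_harmonicProj_mul_harmonicProj_mul_eq_zero u v hm htri]

theorem sum_gevreyWeight_mul_harmonicEnergy_sum_mul_sum_le {k lam : ℝ} (hk : 0 ≤ k)
    (hlam : 0 ≤ lam) (u v : C(ℝ × ℝ, ℝ)) (I T : Finset ℕ) :
    ∑ n ∈ T, gevreyWeight k lam n *
        harmonicEnergy n ((∑ i ∈ I, harmonicProj i u) * ∑ j ∈ I, harmonicProj j v) ≤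
      4 * ((∑ i ∈ I, sobolevWeight k i) * (4 ^ k / (4 * π))) *
        (∑ n ∈ I, gevreyWeight k lam n * harmonicEnergy n u) *
        ∑ n ∈ I, gevreyWeight k lam n * harmonicEnergy n v := by
  classical
  have huv := sum_gevreyWeight_mul_harmonicEnergy_paraproduct_le hk hlam (fun _ _ _ h => h) u v I T
  have hvu := sum_gevreyWeight_mul_harmonicEnergy_paraproduct_le hk hlam
    (R := fun n i j => IsLowHigh n i j ∧ ¬IsLowHigh n j i) (fun _ _ _ h => h.1) v u I T
  have hsplit (n : ℕ) :
      harmonicEnergy n ((∑ i ∈ I, harmonicProj i u) * ∑ j ∈ I, harmonicProj j v) ≤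
        2 * (harmonicEnergy n (paraproduct (IsLowHigh n) I u v) + harmonicEnergy n
          (paraproduct (fun i j => IsLowHigh n i j ∧ ¬IsLowHigh n j i) I v u)) := by
    refine le_of_eq_of_le ?_ (harmonicEnergy_add_le n _ _)
    exact Finset.sum_congr rfl fun m hm => by
      rw [sphereIntegral_sum_mul_sum_mul_sphericalHarmonic I u v hm]
  have hsum := Finset.sum_le_sum fun n (_ : n ∈ T) =>
    mul_le_mul_of_nonneg_left (hsplit n) (gevreyWeight_pos k lam n).le
  simp only [mul_left_comm _ (2 : ℝ), ← Finset.mul_sum, mul_add (gevreyWeight k lam _),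
    Finset.sum_add_distrib] at hsum
  linarith

end Paraproduct

section Completeness

open Polynomial Real

theorem eq_zero_of_forall_integral_mul_polynomial_eq_zero {a b : ℝ} (hab : a < b) {f : ℝ → ℝ}
    (hf : ContinuousOn f (Set.Icc a b)) (h : ∀ p : ℝ[X], ∫ x in a..b, f x * p.eval x = 0) {x : ℝ}
    (hx : x ∈ Set.Icc a b) : f x = 0 := by
  by_contra hfx
  have hint {g : ℝ → ℝ} (hg : ContinuousOn g (Set.Icc a b)) : IntervalIntegrable g volume a b :=
    hg.intervalIntegrable_of_Icc hab.le
  have hpos : 0 < ∫ y in a..b, f y * f y :=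
    intervalIntegral.integral_pos hab (hf.mul hf) (fun y _ => mul_self_nonneg _)
      ⟨x, hx, mul_self_pos.2 hfx⟩
  set I := ∫ y in a..b, f y * f y
  set A := ∫ y in a..b, |f y|
  have hA : 0 ≤ A := intervalIntegral.integral_nonneg hab.le fun y _ => abs_nonneg _
  obtain ⟨p, hp⟩ := exists_polynomial_near_of_continuousOn a b f hf (I / (A + 1)) (by positivity)
  have hle : I ≤ I / (A + 1) * A := by
    calc I = ∫ y in a..b, f y * (f y - p.eval y) := by
          have hff : IntervalIntegrable (fun y => f y * f y) volume a b := hint (hf.mul hf)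
          have hfp : IntervalIntegrable (fun y => f y * p.eval y) volume a b :=
            hint (hf.mul p.continuous.continuousOn)
          simp only [mul_sub]
          rw [intervalIntegral.integral_sub hff hfp, h p, sub_zero]
      _ ≤ ∫ y in a..b, I / (A + 1) * |f y| := by
          refine intervalIntegral.integral_mono_on hab.le
            (hint (hf.mul (hf.sub p.continuous.continuousOn))) (hint (hf.abs.const_mul _))
            fun y hy => ?_
          calc f y * (f y - p.eval y) ≤ |f y| * |p.eval y - f y| := by
                rw [abs_sub_comm, ← abs_mul]
                exact le_abs_self _
            _ ≤ |f y| * (I / (A + 1)) := by gcongr; exact (hp y hy).le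
            _ = I / (A + 1) * |f y| := mul_comm _ _
      _ = I / (A + 1) * A := intervalIntegral.integral_const_mul _ _
  rw [div_mul_eq_mul_div, le_div_iff₀ (by positivity)] at hle
  linarith

/-- The `m`-th Fourier coefficient of `g` in the longitude, as a function of the colatitude. -/
def azimuthalCoeff (g : C(ℝ × ℝ, ℝ)) (m : ℤ) (θ : ℝ) : ℝ :=
  ∫ φ in (0)..(2 * π), g (θ, φ) * azimuthal m φ

@[fun_prop]
theorem continuous_azimuthalCoeff (g : C(ℝ × ℝ, ℝ)) (m : ℤ) : Continuous (azimuthalCoeff g m) := by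
  refine intervalIntegral.continuous_parametric_intervalIntegral_of_continuous' ?_ _ _
  simp only [Function.uncurry_def]
  fun_prop

/-- The weight in `x = cos θ` against which the coefficients of `g` of order `m` are moments of the
derivatives of the Legendre polynomials; `√(1 - x²)` is `sin θ`. -/
def meridionalWeight (g : C(ℝ × ℝ, ℝ)) (m : ℤ) : C(ℝ, ℝ) where
  toFun x := azimuthalCoeff g m (arccos x) * √(1 - x ^ 2) ^ m.natAbs

theorem meridionalWeight_cos (g : C(ℝ × ℝ, ℝ)) (m : ℤ) {θ : ℝ} (hθ : θ ∈ Set.Icc 0 π) :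
    meridionalWeight g m (cos θ) = azimuthalCoeff g m θ * |sin θ| ^ m.natAbs := by
  change azimuthalCoeff g m (arccos (cos θ)) * √(1 - cos θ ^ 2) ^ m.natAbs = _
  rw [arccos_cos hθ.1 hθ.2, ← abs_sin_eq_sqrt_one_sub_cos_sq]

theorem sphereIntegral_mul_sphericalHarmonic (g : C(ℝ × ℝ, ℝ)) (n : ℕ) (m : ℤ) :
    sphereIntegral (g * sphericalHarmonic n m) =
      harmonicNorm n m * weightedIntegral (meridionalWeight g m) (legendreDeriv n m.natAbs) := by
  have hcont : Continuous (Function.uncurry fun φ θ =>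
      (g * sphericalHarmonic n m) (θ, φ) * sin θ) := by
    simp only [Function.uncurry_def]
    fun_prop
  rw [sphereIntegral_apply, intervalIntegral_intervalIntegral_swap, weightedIntegral_apply,
    ← integral_comp_cos_mul_sin (by fun_prop), ← intervalIntegral.integral_const_mul]
  · refine intervalIntegral.integral_congr fun θ hθ => ?_
    rw [Set.uIcc_of_le pi_pos.le] at hθ
    simp only [meridionalWeight_cos g m hθ, ContinuousMap.mul_apply, sphericalHarmonic_apply]
    simp only [azimuthalCoeff, ← intervalIntegral.integral_mul_const,
      ← intervalIntegral.integral_const_mul]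
    exact intervalIntegral.integral_congr fun φ _ => by ring
  · refine IntegrableOn.mono_set (t := Set.Icc 0 (2 * π) ×ˢ Set.Icc 0 π)
      (hcont.continuousOn.integrableOn_compact (isCompact_Icc.prod isCompact_Icc)) ?_
    rw [Set.uIoc_of_le two_pi_pos.le, Set.uIoc_of_le pi_pos.le]
    exact Set.prod_mono Set.Ioc_subset_Icc_self Set.Ioc_subset_Icc_self

theorem azimuthalCoeff_eq_zero {g : C(ℝ × ℝ, ℝ)} {m : ℤ}
    (h : ∀ n, m.natAbs ≤ n → sphereIntegral (g * sphericalHarmonic n m) = 0) {θ : ℝ}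
    (hθ : θ ∈ Set.Ioo 0 π) : azimuthalCoeff g m θ = 0 := by
  have hspan : weightedIntegral (meridionalWeight g m) = 0 := by
    refine LinearMap.ext_on_range (span_range_legendreDeriv m.natAbs) fun j => ?_
    have hj := h (m.natAbs + j) (Nat.le_add_right _ _)
    rw [sphereIntegral_mul_sphericalHarmonic] at hj
    exact (mul_eq_zero.1 hj).resolve_left (harmonicNorm_pos _ _).ne'
  have hzero : meridionalWeight g m (cos θ) = 0 :=
    eq_zero_of_forall_integral_mul_polynomial_eq_zero (neg_lt_self one_pos)
      (meridionalWeight g m).continuous.continuousOn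
      (fun p => by rw [← weightedIntegral_apply, hspan, LinearMap.zero_apply])
      ⟨neg_one_le_cos θ, cos_le_one θ⟩
  rw [meridionalWeight_cos g m (Set.Ioo_subset_Icc_self hθ)] at hzero
  exact (mul_eq_zero.1 hzero).resolve_right
    (pow_ne_zero _ (abs_ne_zero.2 (sin_pos_of_mem_Ioo hθ).ne'))

theorem eq_zero_of_sphereIntegral_mul_sphericalHarmonic_eq_zero {g : C(ℝ × ℝ, ℝ)}
    (hper : ∀ θ φ, g (θ, φ + 2 * π) = g (θ, φ))
    (h : ∀ n : ℕ, ∀ m ∈ Finset.Icc (-(n : ℤ)) n, sphereIntegral (g * sphericalHarmonic n m) = 0)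
    {θ : ℝ} (hθ : θ ∈ Set.Icc 0 π) (φ : ℝ) : g (θ, φ) = 0 := by
  have hopen (t : ℝ) (ht : t ∈ Set.Ioo 0 π) : g (t, φ) = 0 :=
    eq_zero_of_integral_mul_azimuthal_eq_zero (f := fun φ => g (t, φ)) (by fun_prop) (hper t)
      (fun m => azimuthalCoeff_eq_zero (fun n hn => h n m (mem_Icc_neg_natCast.2 hn)) ht) φ
  have hclosed : IsClosed {t : ℝ | g (t, φ) = 0} := isClosed_eq (by fun_prop) continuous_const
  exact hclosed.closure_subset_iff.2 hopen (by rwa [closure_Ioo pi_pos.ne])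

end Completeness

section HarmonicExpansion

open Real Filter Topology

theorem norm_harmonicProj_apply_le (k : ℝ) {lam : ℝ} (hlam : 0 ≤ lam) (n : ℕ) (u : C(ℝ × ℝ, ℝ))
    (p : ℝ × ℝ) :
    ‖harmonicProj n u p‖ ≤ gevreyWeight k lam n * harmonicEnergy n u + sobolevWeight k n := by
  have henergy := mul_nonneg (gevreyWeight_pos k lam n).le (harmonicEnergy_nonneg n u)
  have hsob := (sobolevWeight_pos k n).le
  have hsup : (2 * n + 1) / (4 * π) ≤ gevreyWeight k lam n * sobolevWeight k n := by
    calc (2 * n + 1) / (4 * π) ≤ (2 * n + 1 : ℝ) :=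
          div_le_self (by positivity) (by linarith [pi_gt_three])
      _ ≤ (2 * n + 1) ^ 2 := le_self_pow₀ (by linarith [n.cast_nonneg (α := ℝ)]) two_ne_zero
      _ ≤ sobolevWeight k n * gevreyWeight k lam n := by
          rw [sobolevWeight_mul_gevreyWeight]
          exact le_mul_of_one_le_right (by positivity) (one_le_exp (by positivity))
      _ = _ := mul_comm _ _
  refine abs_le_of_sq_le_sq ?_ (add_nonneg henergy hsob)
  calc harmonicProj n u p ^ 2
      ≤ harmonicEnergy n u * ((2 * n + 1) / (4 * π)) := harmonicProj_apply_sq_le n u p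
    _ ≤ harmonicEnergy n u * (gevreyWeight k lam n * sobolevWeight k n) := by
        gcongr
        exact harmonicEnergy_nonneg n u
    _ ≤ (gevreyWeight k lam n * harmonicEnergy n u + sobolevWeight k n) ^ 2 := by
        nlinarith [mul_nonneg henergy hsob, sq_nonneg (gevreyWeight k lam n * harmonicEnergy n u),
          sq_nonneg (sobolevWeight k n)]

theorem summable_harmonicProj {k lam : ℝ} (hk : 3 / 2 < k) (hlam : 0 ≤ lam) {u : C(ℝ × ℝ, ℝ)}
    (hu : Summable fun n => gevreyWeight k lam n * harmonicEnergy n u) :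
    Summable fun n => harmonicProj n u := by
  refine ContinuousMap.summable_of_locally_summable_norm fun K => ?_
  refine (hu.add (summable_sobolevWeight hk)).of_nonneg_of_le (fun _ => norm_nonneg _) fun n => ?_
  refine (ContinuousMap.norm_le _ (add_nonneg (mul_nonneg (gevreyWeight_pos k lam n).le
    (harmonicEnergy_nonneg n u)) (sobolevWeight_pos k n).le)).2 fun p => ?_
  exact norm_harmonicProj_apply_le k hlam n u p

theorem tsum_harmonicProj_apply {u : C(ℝ × ℝ, ℝ)} (hu : Summable fun n => harmonicProj n u)
    (hper : ∀ θ φ, u (θ, φ + 2 * π) = u (θ, φ)) {θ : ℝ} (hθ : θ ∈ Set.Icc 0 π) (φ : ℝ) :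
    (∑' n, harmonicProj n u) (θ, φ) = u (θ, φ) := by
  have hcoeff (n : ℕ) (m : ℤ) (hm : m ∈ Finset.Icc (-(n : ℤ)) n) :
      sphereIntegral ((∑' i, harmonicProj i u) * sphericalHarmonic n m) =
        sphereIntegral (u * sphericalHarmonic n m) := by
    rw [← hu.tsum_mul_right, ContinuousLinearMap.map_tsum _ (hu.mul_right _)]
    simp only [sphereIntegral_harmonicProj_mul_sphericalHarmonic _ u hm]
    rw [tsum_eq_single n fun i hi => if_neg hi, if_pos rfl]
  rw [← sub_eq_zero, ← ContinuousMap.sub_apply]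
  refine eq_zero_of_sphereIntegral_mul_sphericalHarmonic_eq_zero (fun θ φ => ?_)
    (fun n m hm => ?_) hθ φ
  · simp only [ContinuousMap.sub_apply, hper, ← ContinuousMap.tsum_apply hu,
      harmonicProj_add_two_pi]
  · rw [sub_mul, map_sub, hcoeff n m hm, sub_self]

theorem continuous_harmonicEnergy (n : ℕ) : Continuous (harmonicEnergy n) := by
  unfold harmonicEnergy
  fun_prop

theorem harmonicEnergy_congr (n : ℕ) {f g : C(ℝ × ℝ, ℝ)}
    (h : ∀ θ ∈ Set.Icc 0 π, ∀ φ, f (θ, φ) = g (θ, φ)) :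
    harmonicEnergy n f = harmonicEnergy n g :=
  Finset.sum_congr rfl fun m _ => congrArg (· ^ 2) <| sphereIntegral_congr fun θ hθ φ _ => by
    rw [ContinuousMap.mul_apply, ContinuousMap.mul_apply, h θ hθ φ]

/-- The square of the constant of the algebra inequality for the Gevrey norm. -/
def gevreyConst (k : ℝ) : ℝ := 4 * ((∑' n, sobolevWeight k n) * (4 ^ k / (4 * π)))

theorem gevreyConst_pos {k : ℝ} (hk : 3 / 2 < k) : 0 < gevreyConst k := by
  have hsum : 0 < ∑' n, sobolevWeight k n :=
    (summable_sobolevWeight hk).tsum_pos (fun n => (sobolevWeight_pos k n).le) 0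
      (sobolevWeight_pos k 0)
  unfold gevreyConst
  positivity

theorem sum_gevreyWeight_mul_harmonicEnergy_mul_le {k lam : ℝ} (hk : 3 / 2 < k) (hlam : 0 ≤ lam)
    {u v : C(ℝ × ℝ, ℝ)} (hpu : ∀ θ φ, u (θ, φ + 2 * π) = u (θ, φ))
    (hpv : ∀ θ φ, v (θ, φ + 2 * π) = v (θ, φ))
    (hu : Summable fun n => gevreyWeight k lam n * harmonicEnergy n u)
    (hv : Summable fun n => gevreyWeight k lam n * harmonicEnergy n v) (T : Finset ℕ) :
    ∑ n ∈ T, gevreyWeight k lam n * harmonicEnergy n (u * v) ≤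
      gevreyConst k * (∑' n, gevreyWeight k lam n * harmonicEnergy n u) *
        ∑' n, gevreyWeight k lam n * harmonicEnergy n v := by
  have hU := summable_harmonicProj hk hlam hu
  have hV := summable_harmonicProj hk hlam hv
  have hcongr (n : ℕ) : harmonicEnergy n (u * v) =
      harmonicEnergy n ((∑' i, harmonicProj i u) * ∑' j, harmonicProj j v) :=
    harmonicEnergy_congr n fun θ hθ φ => by
      rw [ContinuousMap.mul_apply, ContinuousMap.mul_apply, tsum_harmonicProj_apply hU hpu hθ,
        tsum_harmonicProj_apply hV hpv hθ]
  have hleft : Tendsto (fun I : Finset ℕ => ∑ n ∈ T, gevreyWeight k lam n *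
      harmonicEnergy n ((∑ i ∈ I, harmonicProj i u) * ∑ j ∈ I, harmonicProj j v)) atTop
      (𝓝 (∑ n ∈ T, gevreyWeight k lam n * harmonicEnergy n (u * v))) := by
    simp only [hcongr]
    exact tendsto_finsetSum _ fun n _ =>
      (((continuous_harmonicEnergy n).tendsto _).comp
        (Tendsto.mul hU.hasSum hV.hasSum)).const_mul _
  exact le_of_tendsto_of_tendsto' hleft
    (((((summable_sobolevWeight hk).hasSum.mul_const _).const_mul 4).mul hu.hasSum).mul hv.hasSum)
    fun I => sum_gevreyWeight_mul_harmonicEnergy_sum_mul_sum_le (by linarith) hlam u v I T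

end HarmonicExpansion

section GevreyNorm

theorem gevKNormSq_eq_tsum (k lam : ℝ) (u : C(ℝ × ℝ, ℝ)) :
    gevKNormSq k lam (fun θ φ => u (θ, φ)) =
      ∑' n, ENNReal.ofReal (gevreyWeight k lam n * harmonicEnergy n u) := by
  have hmem (n : ℕ) (m : ℤ) : m ∈ Finset.Icc (-(n : ℤ)) n ↔ |m| ≤ n := by
    rw [Finset.mem_Icc, abs_le]
  rw [gevKNormSq, ENNReal.tsum_prod']
  refine tsum_congr fun n => ?_
  rw [tsum_eq_sum fun m hm => if_neg ((hmem n m).not.1 hm), harmonicEnergy, Finset.mul_sum,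
    ENNReal.ofReal_sum_of_nonneg fun m _ => mul_nonneg (gevreyWeight_pos k lam n).le (sq_nonneg _)]
  refine Finset.sum_congr rfl fun m hm => ?_
  rw [if_pos ((hmem n m).1 hm), coeff_eq_sphereIntegral]
  rfl

theorem summable_of_gevKNormSq_lt_top {k lam : ℝ} {u : C(ℝ × ℝ, ℝ)}
    (h : gevKNormSq k lam (fun θ φ => u (θ, φ)) < ⊤) :
    Summable fun n => gevreyWeight k lam n * harmonicEnergy n u := by
  rw [gevKNormSq_eq_tsum] at h
  refine (ENNReal.summable_toReal h.ne).congr fun n => ENNReal.toReal_ofReal ?_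
  exact mul_nonneg (gevreyWeight_pos k lam n).le (harmonicEnergy_nonneg n u)

theorem gevKNormSq_eq_ofReal_tsum {k lam : ℝ} {u : C(ℝ × ℝ, ℝ)}
    (h : Summable fun n => gevreyWeight k lam n * harmonicEnergy n u) :
    gevKNormSq k lam (fun θ φ => u (θ, φ)) =
      ENNReal.ofReal (∑' n, gevreyWeight k lam n * harmonicEnergy n u) := by
  rw [gevKNormSq_eq_tsum, ENNReal.ofReal_tsum_of_nonneg _ h]
  exact fun n => mul_nonneg (gevreyWeight_pos k lam n).le (harmonicEnergy_nonneg n u)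

theorem gevKNormSq_mul_le {k lam : ℝ} (hk : 3 / 2 < k) (hlam : 0 ≤ lam) {u v : C(ℝ × ℝ, ℝ)}
    (hpu : ∀ θ φ, u (θ, φ + 2 * Real.pi) = u (θ, φ))
    (hpv : ∀ θ φ, v (θ, φ + 2 * Real.pi) = v (θ, φ))
    (hu : gevKNormSq k lam (fun θ φ => u (θ, φ)) < ⊤)
    (hv : gevKNormSq k lam (fun θ φ => v (θ, φ)) < ⊤) :
    gevKNormSq k lam (fun θ φ => u (θ, φ) * v (θ, φ)) ≤ ENNReal.ofReal (gevreyConst k) *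
      gevKNormSq k lam (fun θ φ => u (θ, φ)) * gevKNormSq k lam (fun θ φ => v (θ, φ)) := by
  have hsu := summable_of_gevKNormSq_lt_top hu
  have hsv := summable_of_gevKNormSq_lt_top hv
  have hbound := sum_gevreyWeight_mul_harmonicEnergy_mul_le hk hlam hpu hpv hsu hsv
  have hnonneg (n : ℕ) (f : C(ℝ × ℝ, ℝ)) : 0 ≤ gevreyWeight k lam n * harmonicEnergy n f :=
    mul_nonneg (gevreyWeight_pos k lam n).le (harmonicEnergy_nonneg n f)
  have hK := (gevreyConst_pos hk).le
  calc gevKNormSq k lam (fun θ φ => (u * v) (θ, φ))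
      = ENNReal.ofReal (∑' n, gevreyWeight k lam n * harmonicEnergy n (u * v)) :=
        gevKNormSq_eq_ofReal_tsum (summable_of_sum_le (fun n => hnonneg n _) hbound)
    _ ≤ ENNReal.ofReal (gevreyConst k * (∑' n, gevreyWeight k lam n * harmonicEnergy n u) *
          ∑' n, gevreyWeight k lam n * harmonicEnergy n v) :=
        ENNReal.ofReal_le_ofReal
          (Real.tsum_le_of_sum_le (fun n => hnonneg n _) hbound)
    _ = _ := by
        rw [gevKNormSq_eq_ofReal_tsum hsu, gevKNormSq_eq_ofReal_tsum hsv, ← ENNReal.ofReal_mul hK,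
          ← ENNReal.ofReal_mul (mul_nonneg hK (tsum_nonneg fun n => hnonneg n u))]

end GevreyNorm

/-- For `k > 3/2` the Gevrey class `G^{k/2}_λ` is a topological
algebra: `‖uv‖_{G^{k/2}_λ} ≤ C_k ‖u‖_{G^{k/2}_λ} ‖v‖_{G^{k/2}_λ}` with `C_k`
depending only on `k` (not on `λ`). -/
theorem gevrey_algebra (k : ℝ) (hk : 3/2 < k) :
    ∃ C : ℝ, 0 < C ∧
      ∀ lam : ℝ, 0 ≤ lam → ∀ u v : SphereFun,
        Continuous (Function.uncurry u) → Continuous (Function.uncurry v) →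
        PeriodicPhi u → PeriodicPhi v →
        gevKNormSq k lam u < ⊤ → gevKNormSq k lam v < ⊤ →
        gevKNormSq k lam (fun θ φ => u θ φ * v θ φ) < ⊤ ∧
        gevKNormSq k lam (fun θ φ => u θ φ * v θ φ)
          ≤ ENNReal.ofReal (C^2) * gevKNormSq k lam u * gevKNormSq k lam v := by
  refine ⟨√(gevreyConst k), Real.sqrt_pos.2 (gevreyConst_pos hk), ?_⟩
  intro lam hlam u v hu hv hpu hpv hfu hfv
  rw [Real.sq_sqrt (gevreyConst_pos hk).le]
  have hle := gevKNormSq_mul_le (u := ⟨_, hu⟩) (v := ⟨_, hv⟩) hk hlam hpu hpv hfu hfv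
  exact ⟨hle.trans_lt
    (ENNReal.mul_lt_top (ENNReal.mul_lt_top ENNReal.ofReal_lt_top hfu) hfv), hle⟩
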